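/- arXiv:1504.00233 — 5 statements merged into one kernel-verified Lean document; each statement's English description precedes it below -/
import Mathlib

section
/- Joint concavity of the sandwiched (minimal) Rényi trace functional for α ∈ [1/2, 1): let α ∈ [1/2,1), set c = (1−α)/(2α), and for n×n positive definite complex matrices ρ, σ define Q̃_α(ρ‖σ) = Re tr((σ^c · ρ · σ^c)^α). Then for positive definite ρ₁, ρ₂, σ₁, σ₂ and λ ∈ [0,1], Q̃_α(λρ₁+(1−λ)ρ₂ ‖ λσ₁+(1−λ)σ₂) ≥ λ·Q̃_α(ρ₁‖σ₁) + (1−λ)·Q̃_α(ρ₂‖σ₂). -/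
/-!
Put `p = (1-α)/α ∈ (0,1]`, `c = p/2` and `X = σ^c ρ σ^c`. The proof writes `sandwichedQ α ρ σ` as an
infimum of jointly concave functions of `(ρ, σ)`, after Frank and Lieb.

* Weighted AM-GM, lifted to traces (`klein`), gives
  `tr X^α ≤ α tr (X W⁻¹) + (1-α) tr W^(1/p)`, with equality at `W = X^(1-α)`. For
  `W = σ^c R R* σ^c` the right-hand side is
  `varQ α ρ σ R = α tr (ρ (R R*)⁻¹) + (1-α) tr (R* σ^p R)^(1/p)`, so `sandwichedQ α ρ σ` is the
  minimum of `varQ α ρ σ R` over invertible `R` (`sandwichedQ_le_varQ`, `exists_varQ_eq`).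
* The first term of `varQ` is linear in `ρ`. The second is concave in `σ` by Epstein's theorem
  (`epstein`), which follows from Lieb's concavity theorem (`lieb`) because
  `tr Y^s = max_Z [s tr (Y Z^(1-p)) - (s-1) tr Z]` with `s = 1/p`.
* Lieb's theorem, for `tr (K* A^p K B^(1-p))`, follows from
  `a^p b^(1-p) = ∫ t^(p-1) (a b / (a + t b)) dμ(t)`: for each `t` the corresponding form `parSum` is a
  minimum over decompositions `K = X + Y` of `t⁻¹ tr (X* A X) + tr (Y* Y B)`, which is linear in
  `(A, B)`.

All traces of functions of two matrices are evaluated through `re_trace_cfc`, which reduces them to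
scalar sums over pairs of eigenvalues.
-/

open Matrix
open scoped ComplexOrder

/-- Real power of a Hermitian matrix via the spectral decomposition (junk value `0`
if the matrix is not Hermitian). Eigenvalue `0` is sent to `0` whenever `c ≠ 0`. -/
noncomputable def mpow {d : Type*} [Fintype d] [DecidableEq d]
    (M : Matrix d d ℂ) (c : ℝ) : Matrix d d ℂ :=
  if hM : M.IsHermitian then hM.cfc (fun t => t ^ c) else 0

/-- The sandwiched (minimal) Rényi trace functional
`Q̃_α(ρ‖σ) = Re tr ((σ^c ρ σ^c)^α)` with `c = (1-α)/(2α)`. -/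
noncomputable def sandwichedQ {d : Type*} [Fintype d] [DecidableEq d]
    (α : ℝ) (ρ σ : Matrix d d ℂ) : ℝ :=
  ((mpow (mpow σ ((1 - α) / (2 * α)) * ρ * mpow σ ((1 - α) / (2 * α))) α).trace).re

/-! ### Powers and traces in eigenbases -/

namespace SandwichedConcavity

open Finset MeasureTheory

variable {d : Type*} [Fintype d] [DecidableEq d]

/-- The squared moduli of the entries of `K` written in the eigenbases of `A` (rows) and `B`
(columns). -/
noncomputable def weight {A B : Matrix d d ℂ} (hA : A.IsHermitian) (hB : B.IsHermitian)
    (K : Matrix d d ℂ) (i j : d) : ℝ :=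
  Complex.normSq (((hA.eigenvectorUnitary : Matrix d d ℂ)ᴴ * K *
    (hB.eigenvectorUnitary : Matrix d d ℂ)) i j)

lemma weight_nonneg {A B : Matrix d d ℂ} (hA : A.IsHermitian) (hB : B.IsHermitian)
    (K : Matrix d d ℂ) (i j : d) : 0 ≤ weight hA hB K i j :=
  Complex.normSq_nonneg _

lemma cfc_eq_conj {A : Matrix d d ℂ} (hA : A.IsHermitian) (f : ℝ → ℝ) :
    hA.cfc f = (hA.eigenvectorUnitary : Matrix d d ℂ) *
      diagonal (fun i => ((f (hA.eigenvalues i) : ℝ) : ℂ)) *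
      (hA.eigenvectorUnitary : Matrix d d ℂ)ᴴ := by
  rw [Matrix.IsHermitian.cfc, Unitary.conjStarAlgAut_apply]
  rfl

lemma re_trace_diag (M : Matrix d d ℂ) (x y : d → ℝ) :
    (trace (Mᴴ * diagonal (fun i => (x i : ℂ)) * M * diagonal (fun i => (y i : ℂ)))).re =
      ∑ i, ∑ j, x i * y j * Complex.normSq (M i j) := by
  rw [Finset.sum_comm]
  simp only [trace, diag_apply, mul_diagonal, Complex.re_sum]
  refine Finset.sum_congr rfl fun j _ => ?_
  rw [mul_apply, Finset.sum_mul, Complex.re_sum]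
  refine Finset.sum_congr rfl fun i _ => ?_
  rw [mul_diagonal, conjTranspose_apply]
  simp [Complex.normSq_apply]
  ring

/-- A trace of functions of two Hermitian matrices is a double sum over their eigenvalues with
nonnegative weights, so trace inequalities of this shape reduce to scalar ones. -/
lemma re_trace_cfc {A B : Matrix d d ℂ} (hA : A.IsHermitian) (hB : B.IsHermitian)
    (K : Matrix d d ℂ) (f g : ℝ → ℝ) :
    (trace (Kᴴ * hA.cfc f * K * hB.cfc g)).re =
      ∑ i, ∑ j, f (hA.eigenvalues i) * g (hB.eigenvalues j) * weight hA hB K i j := by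
  unfold weight
  rw [← re_trace_diag, cfc_eq_conj, cfc_eq_conj, conjTranspose_mul, conjTranspose_mul,
    conjTranspose_conjTranspose]
  congr 1
  simp only [Matrix.mul_assoc]
  rw [← Matrix.mul_assoc, ← Matrix.mul_assoc, ← Matrix.mul_assoc, ← Matrix.mul_assoc,
    ← Matrix.mul_assoc, ← Matrix.mul_assoc, ← Matrix.mul_assoc, trace_mul_comm]
  simp only [Matrix.mul_assoc]

lemma mpow_eq_cfc (A : Matrix d d ℂ) (c : ℝ) : mpow A c = cfc (fun t : ℝ => t ^ c) A := by
  unfold mpow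
  split_ifs with h
  · rw [h.cfc_eq]
  · exact (cfc_apply_of_not_predicate A (by exact h)).symm

lemma mpow_eq {A : Matrix d d ℂ} (hA : A.IsHermitian) (c : ℝ) :
    mpow A c = hA.cfc (fun t : ℝ => t ^ c) := dif_pos hA

lemma cfc_id' {A : Matrix d d ℂ} (hA : A.IsHermitian) : hA.cfc (fun t => t) = A := by
  rw [← hA.cfc_eq]; exact _root_.cfc_id' ℝ A hA

lemma cfc_one' {A : Matrix d d ℂ} (hA : A.IsHermitian) : hA.cfc (fun _ => 1) = 1 := by
  rw [← hA.cfc_eq]; exact cfc_const_one ℝ A hA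

lemma contOn_spectrum (A : Matrix d d ℂ) (f : ℝ → ℝ) : ContinuousOn f (spectrum ℝ A) :=
  (Matrix.finite_real_spectrum (A := A)).continuousOn f

lemma spectrum_pos {A : Matrix d d ℂ} (hA : A.PosDef) {t : ℝ} (ht : t ∈ spectrum ℝ A) :
    0 < t := by
  rw [hA.1.spectrum_real_eq_range_eigenvalues] at ht
  obtain ⟨i, rfl⟩ := ht
  exact hA.eigenvalues_pos i

lemma isHermitian_mpow (A : Matrix d d ℂ) (c : ℝ) : (mpow A c).IsHermitian := by
  rw [mpow_eq_cfc]; exact cfc_predicate _ A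

lemma posDef_mpow {A : Matrix d d ℂ} (hA : A.PosDef) (c : ℝ) : (mpow A c).PosDef := by
  rw [(isHermitian_mpow A c).posDef_iff_eigenvalues_pos]
  intro i
  have h := (isHermitian_mpow A c).eigenvalues_mem_spectrum_real i
  generalize (isHermitian_mpow A c).eigenvalues i = x at h ⊢
  rw [mpow_eq_cfc] at h
  have h' := (cfc_map_spectrum (R := ℝ) (fun t : ℝ => t ^ c) A hA.1
    (contOn_spectrum _ _)).subset h
  obtain ⟨t, ht, rfl⟩ := h'
  exact Real.rpow_pos_of_pos (spectrum_pos hA ht) c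

lemma mpow_mul {A : Matrix d d ℂ} (hA : A.PosDef) (b c : ℝ) :
    mpow A b * mpow A c = mpow A (b + c) := by
  rw [mpow_eq_cfc, mpow_eq_cfc, mpow_eq_cfc, ← cfc_mul _ _ A (contOn_spectrum _ _)
    (contOn_spectrum _ _)]
  exact cfc_congr fun t ht => (Real.rpow_add (spectrum_pos hA ht) b c).symm

lemma mpow_one {A : Matrix d d ℂ} (hA : A.PosDef) : mpow A 1 = A := by
  rw [mpow_eq hA.1]; simpa using cfc_id' hA.1

lemma mpow_zero {A : Matrix d d ℂ} (hA : A.PosDef) : mpow A 0 = 1 := by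
  rw [mpow_eq hA.1]; simpa using cfc_one' hA.1

lemma mpow_mpow {A : Matrix d d ℂ} (hA : A.PosDef) (b c : ℝ) :
    mpow (mpow A b) c = mpow A (b * c) := by
  rw [mpow_eq_cfc, mpow_eq_cfc, mpow_eq_cfc]
  refine (cfc_comp' (R := ℝ) (fun t : ℝ => t ^ c) (fun t : ℝ => t ^ b) A
    (((Matrix.finite_real_spectrum (A := A)).image _).continuousOn _)
    (contOn_spectrum _ _) hA.1).symm.trans ?_
  exact cfc_congr fun t ht => (Real.rpow_mul (spectrum_pos hA ht).le b c).symm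

/-- The trace of a power depends only on the characteristic polynomial; in particular it is the
same for `M N` and `N M`. -/
lemma trace_mpow_congr {A B : Matrix d d ℂ} (hA : A.IsHermitian) (hB : B.IsHermitian)
    (h : A.charpoly = B.charpoly) (c : ℝ) : (mpow A c).trace = (mpow B c).trace := by
  have key : hA.eigenvalues = hB.eigenvalues :=
    (hA.eigenvalues_eq_eigenvalues_iff hB).2 h
  have tr : ∀ {M : Matrix d d ℂ} (hM : M.IsHermitian),
      (mpow M c).trace = ∑ i, ((hM.eigenvalues i ^ c : ℝ) : ℂ) := by
    intro M hM
    have hU : (hM.eigenvectorUnitary : Matrix d d ℂ)ᴴ * hM.eigenvectorUnitary = 1 :=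
      Unitary.coe_star_mul_self hM.eigenvectorUnitary
    rw [mpow_eq hM, cfc_eq_conj, trace_mul_comm, ← Matrix.mul_assoc, hU, Matrix.one_mul,
      trace_diagonal]
  rw [tr hA, tr hB, key]

/-- Klein-type inequality: a scalar inequality `f₁ x * g₁ y ≤ f₂ x * g₂ y + f₃ x * g₃ y` on
positive reals lifts to traces of positive definite matrices. -/
lemma klein {A B : Matrix d d ℂ} (hA : A.PosDef) (hB : B.PosDef)
    (f g k : ℝ) (u v x y z w : ℝ)
    (h : ∀ a b : ℝ, 0 < a → 0 < b →
      f * (a ^ u * b ^ v) ≤ g * (a ^ x * b ^ y) + k * (a ^ z * b ^ w)) :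
    f * (trace (mpow A u * mpow B v)).re ≤
      g * (trace (mpow A x * mpow B y)).re + k * (trace (mpow A z * mpow B w)).re := by
  have e : ∀ u v : ℝ, (trace (mpow A u * mpow B v)).re =
      ∑ i, ∑ j, hA.1.eigenvalues i ^ u * hB.1.eigenvalues j ^ v * weight hA.1 hB.1 1 i j := by
    intro u v
    rw [← re_trace_cfc hA.1 hB.1 1 (fun t => t ^ u) (fun t => t ^ v), mpow_eq hA.1, mpow_eq hB.1]
    simp
  rw [e, e, e]
  simp only [Finset.mul_sum, ← Finset.sum_add_distrib]
  refine Finset.sum_le_sum fun i _ => Finset.sum_le_sum fun j _ => ?_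
  have := mul_le_mul_of_nonneg_right (h _ _ (hA.eigenvalues_pos i) (hB.eigenvalues_pos j))
    (weight_nonneg hA.1 hB.1 1 i j)
  linarith

/-! ### Lieb's concavity theorem -/

/-- The quadratic form, at `K`, of the (weighted) parallel sum of left multiplication by `A` and
right multiplication by `B`, written in the eigenbases of `A` and `B`. -/
noncomputable def parSum {A B : Matrix d d ℂ} (hA : A.IsHermitian) (hB : B.IsHermitian)
    (K : Matrix d d ℂ) (t : ℝ) : ℝ :=
  ∑ i, ∑ j, hA.eigenvalues i * hB.eigenvalues j / (hA.eigenvalues i + t * hB.eigenvalues j) *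
    weight hA hB K i j

lemma re_trace_left {A B : Matrix d d ℂ} (hA : A.IsHermitian) (hB : B.IsHermitian)
    (X : Matrix d d ℂ) :
    (trace (Xᴴ * A * X)).re = ∑ i, ∑ j, hA.eigenvalues i * weight hA hB X i j := by
  have := re_trace_cfc hA hB X (fun t => t) (fun _ => 1)
  rw [cfc_id', cfc_one'] at this
  simpa using this

lemma re_trace_right {A B : Matrix d d ℂ} (hA : A.IsHermitian) (hB : B.IsHermitian)
    (Y : Matrix d d ℂ) :
    (trace (Yᴴ * Y * B)).re = ∑ i, ∑ j, hB.eigenvalues j * weight hA hB Y i j := by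
  have := re_trace_cfc hA hB Y (fun _ => 1) (fun t => t)
  rw [cfc_id', cfc_one'] at this
  simpa using this

lemma parSum_le {A B : Matrix d d ℂ} (hA : A.PosDef) (hB : B.PosDef)
    (X Y : Matrix d d ℂ) {t : ℝ} (ht : 0 < t) :
    parSum hA.1 hB.1 (X + Y) t ≤
      t⁻¹ * (trace (Xᴴ * A * X)).re + (trace (Yᴴ * Y * B)).re := by
  rw [re_trace_left hA.1 hB.1, re_trace_right hA.1 hB.1, parSum]
  simp only [Finset.mul_sum, ← Finset.sum_add_distrib]
  refine Finset.sum_le_sum fun i _ => Finset.sum_le_sum fun j _ => ?_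
  have ha := hA.eigenvalues_pos i
  have hb := hB.eigenvalues_pos j
  unfold weight
  rw [Matrix.mul_add, Matrix.add_mul, Matrix.add_apply]
  generalize hA.1.eigenvalues i = a at *
  generalize hB.1.eigenvalues j = b at *
  generalize (_ * X * _ : Matrix d d ℂ) i j = x
  generalize (_ * Y * _ : Matrix d d ℂ) i j = y
  rw [div_mul_eq_mul_div, div_le_iff₀ (by positivity), inv_mul_eq_div, div_add' _ _ _ ht.ne',
    div_mul_eq_mul_div, le_div_iff₀ ht]
  simp only [Complex.normSq_apply, Complex.add_re, Complex.add_im]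
  nlinarith [sq_nonneg (a * x.re - t * b * y.re), sq_nonneg (a * x.im - t * b * y.im)]

/-- The variational bound `parSum_le` is attained. -/
lemma exists_parSum_eq {A B : Matrix d d ℂ} (hA : A.PosDef) (hB : B.PosDef)
    (K : Matrix d d ℂ) {t : ℝ} (ht : 0 < t) :
    ∃ X Y : Matrix d d ℂ, X + Y = K ∧ parSum hA.1 hB.1 K t =
      t⁻¹ * (trace (Xᴴ * A * X)).re + (trace (Yᴴ * Y * B)).re := by
  set U : Matrix d d ℂ := (hA.1.eigenvectorUnitary : Matrix d d ℂ) with hUdef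
  set V : Matrix d d ℂ := (hB.1.eigenvectorUnitary : Matrix d d ℂ) with hVdef
  have hU : Uᴴ * U = 1 := Unitary.coe_star_mul_self hA.1.eigenvectorUnitary
  have hV : Vᴴ * V = 1 := Unitary.coe_star_mul_self hB.1.eigenvectorUnitary
  set X : Matrix d d ℂ := U * Matrix.of (fun i j =>
    ((t * hB.1.eigenvalues j / (hA.1.eigenvalues i + t * hB.1.eigenvalues j) : ℝ) : ℂ) *
      (Uᴴ * K * V) i j) * Vᴴ with hX
  have hXe : ∀ i j, (Uᴴ * X * V) i j =
      ((t * hB.1.eigenvalues j / (hA.1.eigenvalues i + t * hB.1.eigenvalues j) : ℝ) : ℂ) *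
      (Uᴴ * K * V) i j := by
    intro i j
    rw [hX, Matrix.mul_assoc, Matrix.mul_assoc, Matrix.mul_assoc, hV, Matrix.mul_one,
      ← Matrix.mul_assoc, hU, Matrix.one_mul, Matrix.of_apply]
  refine ⟨X, K - X, by abel, ?_⟩
  rw [re_trace_left hA.1 hB.1, re_trace_right hA.1 hB.1, parSum]
  simp only [Finset.mul_sum, ← Finset.sum_add_distrib]
  refine Finset.sum_congr rfl fun i _ => Finset.sum_congr rfl fun j _ => ?_
  have ha := hA.eigenvalues_pos i
  have hb := hB.eigenvalues_pos j
  unfold weight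
  rw [Matrix.mul_sub, Matrix.sub_mul, Matrix.sub_apply, ← hUdef, ← hVdef, hXe]
  generalize hA.1.eigenvalues i = a at *
  generalize hB.1.eigenvalues j = b at *
  generalize (Uᴴ * K * V) i j = k
  have hab : a + t * b ≠ 0 := by positivity
  have h1 : k - ((t * b / (a + t * b) : ℝ) : ℂ) * k = ((a / (a + t * b) : ℝ) : ℂ) * k := by
    have : (a / (a + t * b) : ℝ) = 1 - t * b / (a + t * b) := by field_simp; ring
    rw [this]; push_cast; ring
  rw [h1, Complex.normSq_mul, Complex.normSq_mul, Complex.normSq_ofReal, Complex.normSq_ofReal]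
  field_simp
  ring

lemma posDef_mix {A B : Matrix d d ℂ} (hA : A.PosDef) (hB : B.PosDef) {l : ℝ}
    (hl0 : 0 ≤ l) (hl1 : l ≤ 1) : ((l : ℂ) • A + ((1 - l : ℝ) : ℂ) • B).PosDef := by
  rcases hl0.eq_or_lt with rfl | h
  · simpa using hB
  · have h1 : (0 : ℂ) < (l : ℂ) := by exact_mod_cast h
    have h2 : (0 : ℂ) ≤ ((1 - l : ℝ) : ℂ) := by exact_mod_cast sub_nonneg.2 hl1
    exact (hA.smul h1).add_posSemidef (hB.posSemidef.smul h2)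

lemma re_trace_mix (A B P Q : Matrix d d ℂ) (l : ℝ) :
    (trace (P * ((l : ℂ) • A + ((1 - l : ℝ) : ℂ) • B) * Q)).re =
      l * (trace (P * A * Q)).re + (1 - l) * (trace (P * B * Q)).re := by
  simp only [Matrix.mul_add, Matrix.add_mul, Matrix.mul_smul, Matrix.smul_mul, trace_add,
    trace_smul, smul_eq_mul, Complex.add_re, Complex.re_ofReal_mul]

lemma parSum_concave {A₁ A₂ B₁ B₂ : Matrix d d ℂ} (hA₁ : A₁.PosDef) (hA₂ : A₂.PosDef)
    (hB₁ : B₁.PosDef) (hB₂ : B₂.PosDef) (K : Matrix d d ℂ) {l : ℝ} (hl0 : 0 ≤ l) (hl1 : l ≤ 1)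
    {t : ℝ} (ht : 0 < t) :
    l * parSum hA₁.1 hB₁.1 K t + (1 - l) * parSum hA₂.1 hB₂.1 K t ≤
      parSum (posDef_mix hA₁ hA₂ hl0 hl1).1 (posDef_mix hB₁ hB₂ hl0 hl1).1 K t := by
  obtain ⟨X, Y, rfl, h⟩ := exists_parSum_eq (posDef_mix hA₁ hA₂ hl0 hl1)
    (posDef_mix hB₁ hB₂ hl0 hl1) K ht
  have e := re_trace_mix B₁ B₂ (Yᴴ * Y) 1 l
  simp only [Matrix.mul_one] at e
  rw [h, re_trace_mix, e]
  have h1 := mul_le_mul_of_nonneg_left (parSum_le hA₁ hB₁ X Y ht) hl0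
  have h2 := mul_le_mul_of_nonneg_left (parSum_le hA₂ hB₂ X Y ht) (sub_nonneg.2 hl1)
  linarith

/-- For `0 < p < 1`, `tr (K* A^p K B^(1-p))` is an integral of parallel sums, because
`a^p b^(1-p) = ∫ t^(p-1) * (a b / (a + t b)) dμ(t)` for a suitable measure `μ`. -/
lemma exists_integral_parSum {p : ℝ} (hp0 : 0 < p) (hp1 : p < 1) :
    ∃ μ : Measure ℝ, ∀ {A B : Matrix d d ℂ} (hA : A.PosDef) (hB : B.PosDef) (K : Matrix d d ℂ),
      IntegrableOn (fun t => t ^ (p - 1) * parSum hA.1 hB.1 K t) (Set.Ioi 0) μ ∧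
      (trace (Kᴴ * mpow A p * K * mpow B (1 - p))).re =
        ∫ t in Set.Ioi 0, t ^ (p - 1) * parSum hA.1 hB.1 K t ∂μ := by
  obtain ⟨μ, hμ⟩ := Real.exists_measure_rpow_eq_integral_rpowIntegrand₀₁ ⟨hp0, hp1⟩
  refine ⟨μ, fun {A B} hA hB K => ?_⟩
  have key : Set.EqOn (fun t => ∑ i, ∑ j, hB.1.eigenvalues j *
        Real.rpowIntegrand₀₁ p t (hA.1.eigenvalues i / hB.1.eigenvalues j) *
        weight hA.1 hB.1 K i j)
      (fun t => t ^ (p - 1) * parSum hA.1 hB.1 K t) (Set.Ioi 0) := by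
    intro t ht
    simp only [parSum, Finset.mul_sum]
    refine Finset.sum_congr rfl fun i _ => Finset.sum_congr rfl fun j _ => ?_
    have ht' : 0 < t := ht
    have ha := hA.eigenvalues_pos i
    have hb := hB.eigenvalues_pos j
    rw [Real.rpowIntegrand₀₁_eq_pow_div ⟨hp0, hp1⟩ ht'.le (by positivity), ← mul_assoc]
    congr 1
    have : t + hA.1.eigenvalues i / hB.1.eigenvalues j ≠ 0 := by positivity
    have : hA.1.eigenvalues i + t * hB.1.eigenvalues j ≠ 0 := by positivity
    field_simp
    ring
  have hint : ∀ i j, IntegrableOn (fun t => hB.1.eigenvalues j *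
        Real.rpowIntegrand₀₁ p t (hA.1.eigenvalues i / hB.1.eigenvalues j) *
        weight hA.1 hB.1 K i j) (Set.Ioi 0) μ := fun i j =>
    ((hμ _ (div_pos (hA.eigenvalues_pos i) (hB.eigenvalues_pos j)).le).1.const_mul _).mul_const _
  constructor
  · refine IntegrableOn.congr_fun ?_ key measurableSet_Ioi
    exact integrable_finsetSum _ fun i _ => integrable_finsetSum _ fun j _ => hint i j
  · rw [← setIntegral_congr_fun measurableSet_Ioi key,
      integral_finsetSum _ fun i _ => integrable_finsetSum _ fun j _ => hint i j,
      mpow_eq hA.1, mpow_eq hB.1, re_trace_cfc]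
    refine Finset.sum_congr rfl fun i _ => ?_
    rw [integral_finsetSum _ fun j _ => hint i j]
    refine Finset.sum_congr rfl fun j _ => ?_
    have ha := hA.eigenvalues_pos i
    have hb := hB.eigenvalues_pos j
    rw [integral_mul_const, integral_const_mul, ← (hμ _ (div_pos ha hb).le).2,
      Real.div_rpow ha.le hb.le, Real.rpow_sub hb, Real.rpow_one]
    ring

/-- Lieb's concavity theorem. -/
lemma lieb {p : ℝ} (hp0 : 0 < p) (hp1 : p ≤ 1) {A₁ A₂ B₁ B₂ : Matrix d d ℂ}
    (hA₁ : A₁.PosDef) (hA₂ : A₂.PosDef) (hB₁ : B₁.PosDef) (hB₂ : B₂.PosDef) (K : Matrix d d ℂ)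
    {l : ℝ} (hl0 : 0 ≤ l) (hl1 : l ≤ 1) :
    l * (trace (Kᴴ * mpow A₁ p * K * mpow B₁ (1 - p))).re +
      (1 - l) * (trace (Kᴴ * mpow A₂ p * K * mpow B₂ (1 - p))).re ≤
    (trace (Kᴴ * mpow ((l : ℂ) • A₁ + ((1 - l : ℝ) : ℂ) • A₂) p * K *
      mpow ((l : ℂ) • B₁ + ((1 - l : ℝ) : ℂ) • B₂) (1 - p))).re := by
  have hA := posDef_mix hA₁ hA₂ hl0 hl1
  have hB := posDef_mix hB₁ hB₂ hl0 hl1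
  rcases hp1.eq_or_lt with rfl | hp1
  · rw [sub_self, mpow_zero hB₁, mpow_zero hB₂, mpow_zero hB, mpow_one hA₁, mpow_one hA₂,
      mpow_one hA]
    simp only [Matrix.mul_one]
    rw [re_trace_mix]
  · obtain ⟨μ, hμ⟩ := exists_integral_parSum (d := d) hp0 hp1
    obtain ⟨i₁, e₁⟩ := hμ hA₁ hB₁ K
    obtain ⟨i₂, e₂⟩ := hμ hA₂ hB₂ K
    obtain ⟨i₃, e₃⟩ := hμ hA hB K
    rw [e₁, e₂, e₃, ← integral_const_mul, ← integral_const_mul,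
      ← integral_add (i₁.const_mul l) (i₂.const_mul (1 - l))]
    refine setIntegral_mono_on ((i₁.const_mul l).add (i₂.const_mul (1 - l))) i₃
      measurableSet_Ioi fun t ht => ?_
    have := mul_le_mul_of_nonneg_left (parSum_concave hA₁ hA₂ hB₁ hB₂ K hl0 hl1 ht)
      (Real.rpow_nonneg (le_of_lt ht) (p - 1))
    rw [mul_add, mul_left_comm, mul_left_comm _ (1 - l)] at this
    exact this

/-! ### Epstein's concavity theorem -/

/-- Variational lower bound for `tr Y^(1/p)`. -/
lemma epstein_bound {p : ℝ} (hp0 : 0 < p) (hp1 : p ≤ 1) {Y Z : Matrix d d ℂ}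
    (hY : Y.PosDef) (hZ : Z.PosDef) :
    p⁻¹ * (trace (Y * mpow Z (1 - p))).re ≤
      (trace (mpow Y p⁻¹)).re + (p⁻¹ - 1) * (trace Z).re := by
  have := klein hY hZ p⁻¹ 1 (p⁻¹ - 1) 1 (1 - p) p⁻¹ 0 0 1 (by
    intro a b ha hb
    have h := Real.geom_mean_le_arith_mean2_weighted hp0.le (sub_nonneg.2 hp1)
      (Real.rpow_nonneg ha.le p⁻¹) hb.le (by ring)
    rw [← Real.rpow_mul ha.le, inv_mul_cancel₀ hp0.ne'] at h
    have h2 := mul_le_mul_of_nonneg_left h (inv_nonneg.2 hp0.le)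
    simp only [Real.rpow_zero, Real.rpow_one, mul_one, one_mul] at h2 ⊢
    have e : p⁻¹ * (p * a ^ p⁻¹ + (1 - p) * b) = a ^ p⁻¹ + (p⁻¹ - 1) * b := by
      field_simp
    linarith)
  simpa only [mpow_one hY, mpow_one hZ, mpow_zero hY, mpow_zero hZ, one_mul, mul_one,
    Matrix.one_mul, Matrix.mul_one] using this

lemma posDef_conj {A R : Matrix d d ℂ} (hA : A.PosDef) (hR : IsUnit R) : (Rᴴ * A * R).PosDef :=
  hA.conjTranspose_mul_mul_same (Matrix.mulVec_injective_of_isUnit hR)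

/-- Epstein's theorem: `σ ↦ tr (R* σ^p R)^(1/p)` is concave for `0 < p ≤ 1`. -/
lemma epstein {p : ℝ} (hp0 : 0 < p) (hp1 : p ≤ 1) {σ₁ σ₂ R : Matrix d d ℂ}
    (hσ₁ : σ₁.PosDef) (hσ₂ : σ₂.PosDef) (hR : IsUnit R) {l : ℝ} (hl0 : 0 ≤ l) (hl1 : l ≤ 1) :
    l * (trace (mpow (Rᴴ * mpow σ₁ p * R) p⁻¹)).re +
      (1 - l) * (trace (mpow (Rᴴ * mpow σ₂ p * R) p⁻¹)).re ≤
    (trace (mpow (Rᴴ * mpow ((l : ℂ) • σ₁ + ((1 - l : ℝ) : ℂ) • σ₂) p * R) p⁻¹)).re := by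
  have hY₁ := posDef_conj (posDef_mpow hσ₁ p) hR
  have hY₂ := posDef_conj (posDef_mpow hσ₂ p) hR
  have hY := posDef_conj (posDef_mpow (posDef_mix hσ₁ hσ₂ hl0 hl1) p) hR
  -- `Z = Y^(1/p)` turns `epstein_bound` into an equality
  have eq : ∀ {Y : Matrix d d ℂ}, Y.PosDef → Y * mpow (mpow Y p⁻¹) (1 - p) = mpow Y p⁻¹ := by
    intro Y hY
    rw [mpow_mpow hY]
    nth_rewrite 1 [← mpow_one hY]
    rw [mpow_mul hY]
    congr 1
    field_simp
    ring
  have hZ₁ := posDef_mpow hY₁ p⁻¹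
  have hZ₂ := posDef_mpow hY₂ p⁻¹
  have b := epstein_bound hp0 hp1 hY (posDef_mix hZ₁ hZ₂ hl0 hl1)
  have L := mul_le_mul_of_nonneg_left (lieb hp0 hp1 hσ₁ hσ₂ hZ₁ hZ₂ R hl0 hl1)
    (inv_nonneg.2 hp0.le)
  rw [eq hY₁, eq hY₂] at L
  have e := re_trace_mix (mpow (Rᴴ * mpow σ₁ p * R) p⁻¹) (mpow (Rᴴ * mpow σ₂ p * R) p⁻¹) 1 1 l
  simp only [Matrix.one_mul, Matrix.mul_one] at e
  rw [e] at b
  linarith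

/-! ### Variational formula for the sandwiched functional -/

/-- The functional whose infimum over invertible `R` is `sandwichedQ α ρ σ`. -/
noncomputable def varQ (α : ℝ) (ρ σ R : Matrix d d ℂ) : ℝ :=
  α * (trace (ρ * (R * Rᴴ)⁻¹)).re +
    (1 - α) * (trace (mpow (Rᴴ * mpow σ ((1 - α) / α) * R) ((1 - α) / α)⁻¹)).re

lemma mpow_neg_one {A : Matrix d d ℂ} (hA : A.PosDef) : mpow A (-1) = A⁻¹ := by
  refine (Matrix.inv_eq_right_inv ?_).symm
  nth_rewrite 1 [← mpow_one hA]
  rw [mpow_mul hA, add_neg_cancel, mpow_zero hA]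

lemma posDef_sandwich {ρ σ : Matrix d d ℂ} (hρ : ρ.PosDef) (hσ : σ.PosDef) (c : ℝ) :
    (mpow σ c * ρ * mpow σ c).PosDef := by
  have := posDef_conj hρ (posDef_mpow hσ c).isUnit
  rwa [(isHermitian_mpow σ c).eq] at this

lemma posDef_mul_self {R : Matrix d d ℂ} (hR : IsUnit R) : (R * Rᴴ).PosDef := by
  have := posDef_conj (PosDef.one (n := d) (R := ℂ)) (R := Rᴴ) ((isUnit_conjTranspose R).2 hR)
  simpa using this

/-- `varQ` in terms of the sandwiched state `X = σ^c ρ σ^c` and `W = σ^c R R* σ^c`. -/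
lemma varQ_eq {α : ℝ} (h0 : 0 < α) {ρ σ R : Matrix d d ℂ} (hσ : σ.PosDef) (hR : IsUnit R) :
    varQ α ρ σ R =
      α * (trace ((mpow σ ((1 - α) / (2 * α)) * ρ * mpow σ ((1 - α) / (2 * α))) *
        mpow (mpow σ ((1 - α) / (2 * α)) * (R * Rᴴ) * mpow σ ((1 - α) / (2 * α))) (-1))).re +
      (1 - α) * (trace (mpow (mpow σ ((1 - α) / (2 * α)) * (R * Rᴴ) *
        mpow σ ((1 - α) / (2 * α))) ((1 - α) / α)⁻¹)).re := by
  set c := (1 - α) / (2 * α) with hc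
  have hW := posDef_sandwich (posDef_mul_self hR) hσ c
  have hS : IsUnit (mpow σ c).det := (Matrix.isUnit_iff_isUnit_det _).1 (posDef_mpow hσ c).isUnit
  have hp : (1 - α) / α = c + c := by rw [hc]; field_simp; ring
  have e₁ : (mpow σ c * ρ * mpow σ c * mpow (mpow σ c * (R * Rᴴ) * mpow σ c) (-1)).trace =
      (ρ * (R * Rᴴ)⁻¹).trace := by
    rw [mpow_neg_one hW, Matrix.mul_inv_rev, Matrix.mul_inv_rev, Matrix.mul_assoc,
      Matrix.mul_nonsing_inv_cancel_left _ _ hS, trace_mul_comm, ← Matrix.mul_assoc,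
      Matrix.nonsing_inv_mul_cancel_right _ _ hS, trace_mul_comm]
  have e₂ : (mpow (Rᴴ * mpow σ ((1 - α) / α) * R) ((1 - α) / α)⁻¹).trace =
      (mpow (mpow σ c * (R * Rᴴ) * mpow σ c) ((1 - α) / α)⁻¹).trace := by
    refine trace_mpow_congr (posDef_conj (posDef_mpow hσ _) hR).1 hW.1 ?_ _
    rw [hp, ← mpow_mul hσ]
    have l : Rᴴ * (mpow σ c * mpow σ c) * R = (Rᴴ * mpow σ c) * (mpow σ c * R) := by
      simp only [Matrix.mul_assoc]
    have r : mpow σ c * (R * Rᴴ) * mpow σ c = (mpow σ c * R) * (Rᴴ * mpow σ c) := by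
      simp only [Matrix.mul_assoc]
    rw [l, r, charpoly_mul_comm]
  rw [e₁, ← e₂, varQ]

lemma sandwichedQ_le_varQ {α : ℝ} (h0 : 0 < α) (h1 : α < 1) {ρ σ R : Matrix d d ℂ}
    (hρ : ρ.PosDef) (hσ : σ.PosDef) (hR : IsUnit R) :
    sandwichedQ α ρ σ ≤ varQ α ρ σ R := by
  rw [varQ_eq h0 hσ hR, sandwichedQ]
  set c := (1 - α) / (2 * α)
  have hX := posDef_sandwich hρ hσ c
  have hW := posDef_sandwich (posDef_mul_self hR) hσ c
  have := klein hX hW 1 α (1 - α) α 0 1 (-1) 0 ((1 - α) / α)⁻¹ (by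
    intro x w hx hw
    -- weighted AM-GM for `x / w` and `w^(α/(1-α))`
    have h := Real.geom_mean_le_arith_mean2_weighted h0.le (sub_nonneg.2 h1.le)
      (div_pos hx hw).le (Real.rpow_nonneg hw.le ((1 - α) / α)⁻¹) (by ring)
    have e : ((1 - α) / α)⁻¹ * (1 - α) = α := by
      have : 1 - α ≠ 0 := by linarith
      field_simp
    rw [← Real.rpow_mul hw.le, e, ← Real.mul_rpow (div_pos hx hw).le hw.le,
      div_mul_cancel₀ _ hw.ne'] at h
    simp only [Real.rpow_zero, Real.rpow_one, Real.rpow_neg_one, mul_one, one_mul]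
    rwa [← div_eq_mul_inv])
  simpa only [mpow_one hX, mpow_zero hX, mpow_zero hW, one_mul, mul_one,
    Matrix.one_mul, Matrix.mul_one] using this

/-- The infimum is attained when `σ^c R R* σ^c = X^(1-α)`. -/
lemma exists_varQ_eq {α : ℝ} (h0 : 0 < α) (h1 : α < 1) {ρ σ : Matrix d d ℂ}
    (hρ : ρ.PosDef) (hσ : σ.PosDef) :
    ∃ R : Matrix d d ℂ, IsUnit R ∧ varQ α ρ σ R = sandwichedQ α ρ σ := by
  set c := (1 - α) / (2 * α) with hc
  set X := mpow σ c * ρ * mpow σ c with hXdef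
  have hX : X.PosDef := posDef_sandwich hρ hσ c
  have hR : IsUnit (mpow σ (-c) * mpow X ((1 - α) / 2)) :=
    (posDef_mpow hσ _).isUnit.mul (posDef_mpow hX _).isUnit
  refine ⟨_, hR, ?_⟩
  have hW : mpow σ c * ((mpow σ (-c) * mpow X ((1 - α) / 2)) *
      (mpow σ (-c) * mpow X ((1 - α) / 2))ᴴ) * mpow σ c = mpow X (1 - α) := by
    rw [conjTranspose_mul, (isHermitian_mpow σ _).eq, (isHermitian_mpow X _).eq]
    calc _ = (mpow σ c * mpow σ (-c)) * (mpow X ((1 - α) / 2) * mpow X ((1 - α) / 2)) *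
          (mpow σ (-c) * mpow σ c) := by simp only [Matrix.mul_assoc]
      _ = _ := by
        rw [mpow_mul hσ, mpow_mul hσ, mpow_mul hX, add_neg_cancel, neg_add_cancel, mpow_zero hσ,
          add_halves, Matrix.one_mul, Matrix.mul_one]
  have h1' : 1 - α ≠ 0 := by linarith
  rw [varQ_eq h0 hσ hR, sandwichedQ, ← hc, hW, ← hXdef, mpow_mpow hX, mpow_mpow hX]
  nth_rewrite 1 [← mpow_one hX]
  rw [mpow_mul hX]
  have e1 : 1 + (1 - α) * -1 = α := by ring
  have e2 : (1 - α) * ((1 - α) / α)⁻¹ = α := by field_simp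
  rw [e1, e2]
  ring

end SandwichedConcavity

/-- **Joint concavity of the sandwiched Rényi trace functional for `α ∈ [1/2, 1)`**. -/
theorem sandwichedQ_jointly_concave {n : ℕ} (α : ℝ) (hα₁ : 1/2 ≤ α) (hα₂ : α < 1)
    (ρ₁ ρ₂ σ₁ σ₂ : Matrix (Fin n) (Fin n) ℂ)
    (hρ₁ : ρ₁.PosDef) (hρ₂ : ρ₂.PosDef) (hσ₁ : σ₁.PosDef) (hσ₂ : σ₂.PosDef)
    (l : ℝ) (hl0 : 0 ≤ l) (hl1 : l ≤ 1) :
    sandwichedQ α ((l : ℂ) • ρ₁ + ((1 - l : ℝ) : ℂ) • ρ₂)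
        ((l : ℂ) • σ₁ + ((1 - l : ℝ) : ℂ) • σ₂) ≥
      l * sandwichedQ α ρ₁ σ₁ + (1 - l) * sandwichedQ α ρ₂ σ₂ := by
  have h0 : 0 < α := by linarith
  have hp0 : 0 < (1 - α) / α := div_pos (by linarith) h0
  have hp1 : (1 - α) / α ≤ 1 := by rw [div_le_one h0]; linarith
  obtain ⟨R, hR, e⟩ := SandwichedConcavity.exists_varQ_eq h0 hα₂
    (SandwichedConcavity.posDef_mix hρ₁ hρ₂ hl0 hl1)
    (SandwichedConcavity.posDef_mix hσ₁ hσ₂ hl0 hl1)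
  have b₁ := mul_le_mul_of_nonneg_left
    (SandwichedConcavity.sandwichedQ_le_varQ h0 hα₂ hρ₁ hσ₁ hR) hl0
  have b₂ := mul_le_mul_of_nonneg_left
    (SandwichedConcavity.sandwichedQ_le_varQ h0 hα₂ hρ₂ hσ₂ hR) (sub_nonneg.2 hl1)
  have E := mul_le_mul_of_nonneg_left
    (SandwichedConcavity.epstein hp0 hp1 hσ₁ hσ₂ hR hl0 hl1) (sub_nonneg.2 hα₂.le)
  have T := SandwichedConcavity.re_trace_mix ρ₁ ρ₂ 1 (R * Rᴴ)⁻¹ l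
  simp only [Matrix.one_mul] at T
  rw [← e]
  unfold SandwichedConcavity.varQ at b₁ b₂ ⊢
  rw [T]
  linarith
end

section
/- Joint operator convexity of (A,B) ↦ A·log A ⊗ 1 − A ⊗ log B: let A₁, A₂ be n×n and B₁, B₂ be m×m positive definite complex matrices, λ ∈ [0,1], Ā = λ·A₁ + (1−λ)·A₂ and B̄ = λ·B₁ + (1−λ)·B₂. Then λ·(A₁·log A₁ ⊗ 1_m − A₁ ⊗ log B₁) + (1−λ)·(A₂·log A₂ ⊗ 1_m − A₂ ⊗ log B₂) − (Ā·log Ā ⊗ 1_m − Ā ⊗ log B̄) is positive semidefinite. -/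
/-!
For positive definite `A`, `B` the matrices `X = A ⊗ 1` and `Y = 1 ⊗ B` commute, and
`A log A ⊗ 1 - A ⊗ log B = X log X - X log Y`. For positive reals
`x log x - x log y = (x - y) + ∫₀¹ (1 - s) (x - y)² / (s x + (1 - s) y) ds`
(`mul_log_sub_eq_integral`), so in a joint eigenbasis of `X` and `Y` the quadratic form at any
vector satisfies the corresponding identity (`quad_entropyTerm`)
`A log A ⊗ 1 - A ⊗ log B = D + ∫₀¹ (1 - s) D Z_s⁻¹ D ds`, with `D = X - Y` and
`Z_s = s X + (1 - s) Y`. Both `D` and `Z_s` are linear in `(A, B)`, and `(D, Z) ↦ D Z⁻¹ D` is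
jointly operator convex by the Schur complement criterion (`schur_jointly_convex`): a convex combination of
the positive semidefinite block matrices `[[Z, D], [D, D Z⁻¹ D]]` is positive semidefinite.
Integrating this over `s` gives the claim.
-/

open Matrix
open scoped ComplexOrder Kronecker

/-- Matrix logarithm via the spectral decomposition (junk value `0` if the matrix is
not Hermitian); eigenvalue `0` is sent to `0` by the convention `log 0 = 0`. -/
noncomputable def mlog {d : Type*} [Fintype d] [DecidableEq d]
    (M : Matrix d d ℂ) : Matrix d d ℂ :=
  if hM : M.IsHermitian then hM.cfc Real.log else 0

section RelativeOperatorEntropy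

set_option linter.unusedSectionVars false

variable {d e : Type*} [Fintype d] [DecidableEq d] [Fintype e] [DecidableEq e]

/-- The matrix `W * diag(f) * Wᴴ`; for unitary `W` this is the matrix with real eigenvalues `f` in
the orthonormal basis formed by the columns of `W`. -/
noncomputable def conjDiag (W : Matrix d d ℂ) (f : d → ℝ) : Matrix d d ℂ :=
  W * diagonal (fun i => (f i : ℂ)) * Wᴴ

/-- The (real part of the) quadratic form `v ↦ ⟨v, M v⟩` of a complex matrix. -/
noncomputable def quad (M : Matrix d d ℂ) (v : d → ℂ) : ℝ := (star v ⬝ᵥ (M *ᵥ v)).re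

/-- The expression `A log A ⊗ 1 - A ⊗ log B`. -/
noncomputable def entropyTerm (A : Matrix d d ℂ) (B : Matrix e e ℂ) : Matrix (d × e) (d × e) ℂ :=
  (A * mlog A) ⊗ₖ (1 : Matrix e e ℂ) - A ⊗ₖ mlog B

/-- The difference `A ⊗ 1 - 1 ⊗ B`. -/
noncomputable def kronDiff (A : Matrix d d ℂ) (B : Matrix e e ℂ) : Matrix (d × e) (d × e) ℂ :=
  A ⊗ₖ (1 : Matrix e e ℂ) - (1 : Matrix d d ℂ) ⊗ₖ B

/-- The segment `s (A ⊗ 1) + (1 - s) (1 ⊗ B)` from `1 ⊗ B` to `A ⊗ 1`. -/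
noncomputable def kronSegment (A : Matrix d d ℂ) (B : Matrix e e ℂ) (s : ℝ) :
    Matrix (d × e) (d × e) ℂ :=
  (s : ℂ) • (A ⊗ₖ (1 : Matrix e e ℂ)) + ((1 - s : ℝ) : ℂ) • ((1 : Matrix d d ℂ) ⊗ₖ B)

/-! ### Calculus of unitarily diagonalized matrices -/

lemma conjDiag_mul {W : Matrix d d ℂ} (hW : Wᴴ * W = 1) (f g : d → ℝ) :
    conjDiag W f * conjDiag W g = conjDiag W (fun i => f i * g i) := by
  unfold conjDiag
  calc W * diagonal (fun i => (f i : ℂ)) * Wᴴ * (W * diagonal (fun i => (g i : ℂ)) * Wᴴ)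
      = W * diagonal (fun i => (f i : ℂ)) * (Wᴴ * W) * diagonal (fun i => (g i : ℂ)) * Wᴴ := by
        simp only [Matrix.mul_assoc]
    _ = _ := by
        rw [hW, Matrix.mul_one, Matrix.mul_assoc W, diagonal_mul_diagonal]
        simp

lemma conjDiag_add (W : Matrix d d ℂ) (f g : d → ℝ) :
    conjDiag W f + conjDiag W g = conjDiag W (fun i => f i + g i) := by
  simp only [conjDiag, ← Matrix.add_mul, ← Matrix.mul_add, diagonal_add, Complex.ofReal_add]

lemma conjDiag_sub (W : Matrix d d ℂ) (f g : d → ℝ) :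
    conjDiag W f - conjDiag W g = conjDiag W (fun i => f i - g i) := by
  simp only [conjDiag, ← Matrix.sub_mul, ← Matrix.mul_sub, diagonal_sub, Complex.ofReal_sub]

lemma conjDiag_smul (W : Matrix d d ℂ) (c : ℝ) (f : d → ℝ) :
    (c : ℂ) • conjDiag W f = conjDiag W (fun i => c * f i) := by
  unfold conjDiag
  rw [← Matrix.smul_mul, ← Matrix.mul_smul, ← diagonal_smul]
  congr 3
  ext i
  simp

lemma conjDiag_one {W : Matrix d d ℂ} (hW : W * Wᴴ = 1) : conjDiag W (fun _ => 1) = 1 := by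
  simp [conjDiag, hW]

lemma conjDiag_inv {W : Matrix d d ℂ} (hW : Wᴴ * W = 1) {f : d → ℝ} (hf : ∀ i, 0 < f i) :
    (conjDiag W f)⁻¹ = conjDiag W (fun i => (f i)⁻¹) := by
  apply Matrix.inv_eq_right_inv
  rw [conjDiag_mul hW]
  simp only [mul_inv_cancel₀ (hf _).ne']
  exact conjDiag_one (mul_eq_one_comm.mp hW)

lemma conjDiag_kronecker (U : Matrix d d ℂ) (V : Matrix e e ℂ) (f : d → ℝ) (g : e → ℝ) :
    conjDiag U f ⊗ₖ conjDiag V g = conjDiag (U ⊗ₖ V) (fun p => f p.1 * g p.2) := by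
  simp only [conjDiag, mul_kronecker_mul, diagonal_kronecker_diagonal, conjTranspose_kronecker,
    Complex.ofReal_mul]

lemma conjDiag_isHermitian (W : Matrix d d ℂ) (f : d → ℝ) : (conjDiag W f).IsHermitian := by
  unfold conjDiag
  apply isHermitian_mul_mul_conjTranspose
  rw [Matrix.IsHermitian, diagonal_conjTranspose]
  congr 1
  ext i
  simp

lemma conjDiag_posDef {W : Matrix d d ℂ} (hW : Wᴴ * W = 1) {f : d → ℝ} (hf : ∀ i, 0 < f i) :
    (conjDiag W f).PosDef := by
  have hu : IsUnit W := IsUnit.of_mul_eq_one Wᴴ (mul_eq_one_comm.mp hW)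
  exact (Matrix.IsUnit.posDef_star_right_conjugate_iff hu).mpr
    (PosDef.diagonal fun i => by simpa using hf i)

/-! ### Quadratic forms -/

lemma quad_conjDiag (W : Matrix d d ℂ) (f : d → ℝ) (v : d → ℂ) :
    quad (conjDiag W f) v = ∑ i, f i * Complex.normSq ((Wᴴ *ᵥ v) i) := by
  unfold quad conjDiag
  rw [← Matrix.mulVec_mulVec, ← Matrix.mulVec_mulVec, Matrix.dotProduct_mulVec,
    show star v ᵥ* W = star (Wᴴ *ᵥ v) by rw [star_mulVec, conjTranspose_conjTranspose]]
  simp only [dotProduct, mulVec_diagonal, Complex.re_sum, Pi.star_apply]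
  refine Finset.sum_congr rfl fun i _ => ?_
  simp [Complex.normSq_apply]
  ring

lemma quad_add (M N : Matrix d d ℂ) (v : d → ℂ) : quad (M + N) v = quad M v + quad N v := by
  simp [quad, Matrix.add_mulVec, dotProduct_add]

lemma quad_sub (M N : Matrix d d ℂ) (v : d → ℂ) : quad (M - N) v = quad M v - quad N v := by
  simp [quad, Matrix.sub_mulVec, dotProduct_sub]

lemma quad_smul (c : ℝ) (M : Matrix d d ℂ) (v : d → ℂ) :
    quad ((c : ℂ) • M) v = c * quad M v := by
  simp [quad, Matrix.smul_mulVec, dotProduct_smul]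

/-- A Hermitian matrix has real quadratic form, so it suffices to control the real part. -/
lemma posSemidef_of_quad_nonneg {M : Matrix d d ℂ} (hM : M.IsHermitian)
    (h : ∀ v, 0 ≤ quad M v) : M.PosSemidef := by
  refine PosSemidef.of_dotProduct_mulVec_nonneg hM fun v => ?_
  rw [Complex.nonneg_iff]
  exact ⟨h v, (hM.im_star_dotProduct_mulVec_self v).symm⟩

lemma quad_nonneg {M : Matrix d d ℂ} (hM : M.PosSemidef) (v : d → ℂ) : 0 ≤ quad M v :=
  (Complex.nonneg_iff.mp (hM.dotProduct_mulVec_nonneg v)).1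

/-! ### Joint diagonalization of `A ⊗ 1` and `1 ⊗ B` -/

/-- Spectral decomposition of a positive definite matrix together with its logarithm. -/
lemma exists_conjDiag {A : Matrix d d ℂ} (hA : A.PosDef) :
    ∃ (U : Matrix d d ℂ) (a : d → ℝ), Uᴴ * U = 1 ∧ (∀ i, 0 < a i) ∧ A = conjDiag U a ∧
      mlog A = conjDiag U (fun i => Real.log (a i)) := by
  refine ⟨hA.isHermitian.eigenvectorUnitary, hA.isHermitian.eigenvalues, ?_, hA.eigenvalues_pos,
    hA.isHermitian.spectral_theorem, ?_⟩
  · exact Unitary.coe_star_mul_self hA.isHermitian.eigenvectorUnitary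
  · rw [mlog, dif_pos hA.isHermitian]
    rfl

/-- Simultaneous diagonalization of all the matrices built from `A ⊗ 1` and `1 ⊗ B`. -/
lemma exists_joint_conjDiag {A : Matrix d d ℂ} {B : Matrix e e ℂ} (hA : A.PosDef)
    (hB : B.PosDef) :
    ∃ (W : Matrix (d × e) (d × e) ℂ) (x y : d × e → ℝ), Wᴴ * W = 1 ∧ (∀ p, 0 < x p) ∧
      (∀ p, 0 < y p) ∧
      entropyTerm A B = conjDiag W (fun p => x p * Real.log (x p) - x p * Real.log (y p)) ∧
      kronDiff A B = conjDiag W (fun p => x p - y p) ∧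
      ∀ s : ℝ, kronSegment A B s = conjDiag W (fun p => s * x p + (1 - s) * y p) := by
  obtain ⟨U, a, hU, ha, hAU, hlA⟩ := exists_conjDiag hA
  obtain ⟨V, b, hV, hb, hBV, hlB⟩ := exists_conjDiag hB
  have h1U : (1 : Matrix d d ℂ) = conjDiag U (fun _ => 1) :=
    (conjDiag_one (mul_eq_one_comm.mp hU)).symm
  have h1V : (1 : Matrix e e ℂ) = conjDiag V (fun _ => 1) :=
    (conjDiag_one (mul_eq_one_comm.mp hV)).symm
  have hX : A ⊗ₖ (1 : Matrix e e ℂ) = conjDiag (U ⊗ₖ V) (fun p => a p.1) := by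
    rw [hAU, h1V, conjDiag_kronecker]; simp
  have hY : (1 : Matrix d d ℂ) ⊗ₖ B = conjDiag (U ⊗ₖ V) (fun p => b p.2) := by
    rw [hBV, h1U, conjDiag_kronecker]; simp
  have hXX : (A * mlog A) ⊗ₖ (1 : Matrix e e ℂ)
      = conjDiag (U ⊗ₖ V) (fun p => a p.1 * Real.log (a p.1)) := by
    rw [hlA, h1V]
    nth_rewrite 1 [hAU]
    rw [conjDiag_mul hU, conjDiag_kronecker]; simp
  have hXY : A ⊗ₖ mlog B = conjDiag (U ⊗ₖ V) (fun p => a p.1 * Real.log (b p.2)) := by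
    rw [hlB, hAU, conjDiag_kronecker]
  refine ⟨U ⊗ₖ V, fun p => a p.1, fun p => b p.2, ?_, fun p => ha _, fun p => hb _, ?_, ?_, ?_⟩
  · rw [conjTranspose_kronecker, ← mul_kronecker_mul, hU, hV, one_kronecker_one]
  · rw [entropyTerm, hXX, hXY, conjDiag_sub]
  · rw [kronDiff, hX, hY, conjDiag_sub]
  · intro s
    rw [kronSegment, hX, hY, conjDiag_smul, conjDiag_smul, conjDiag_add]

/-! ### Integral representation -/

lemma segment_pos {x y s : ℝ} (hx : 0 < x) (hy : 0 < y) (hs : s ∈ Set.Icc (0 : ℝ) 1) :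
    0 < s * x + (1 - s) * y := by
  obtain ⟨h0, h1⟩ := hs
  rcases h0.eq_or_lt with rfl | h0
  · simpa using hy
  · have := mul_pos h0 hx
    have := mul_nonneg (sub_nonneg.mpr h1) hy.le
    linarith

lemma continuousOn_integrand {x y : ℝ} (hx : 0 < x) (hy : 0 < y) :
    ContinuousOn (fun s : ℝ => (1 - s) * ((x - y) * (s * x + (1 - s) * y)⁻¹ * (x - y)))
      (Set.uIcc 0 1) := by
  rw [Set.uIcc_of_le zero_le_one]
  have : ContinuousOn (fun s : ℝ => (s * x + (1 - s) * y)⁻¹) (Set.Icc 0 1) :=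
    ContinuousOn.inv₀ (by fun_prop) fun s hs => (segment_pos hx hy hs).ne'
  fun_prop

/-- The scalar identity behind the proof. An antiderivative of the integrand is
`s ↦ x log (s x + (1 - s) y) - s (x - y)`. -/
lemma mul_log_sub_eq_integral {x y : ℝ} (hx : 0 < x) (hy : 0 < y) :
    x * Real.log x - x * Real.log y = (x - y) +
      ∫ s in (0 : ℝ)..1, (1 - s) * ((x - y) * (s * x + (1 - s) * y)⁻¹ * (x - y)) := by
  have key := intervalIntegral.integral_eq_sub_of_hasDerivAt (a := 0) (b := 1)
    (f := fun s : ℝ => x * Real.log (s * x + (1 - s) * y) - s * (x - y))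
    (f' := fun s : ℝ => (1 - s) * ((x - y) * (s * x + (1 - s) * y)⁻¹ * (x - y)))
    (fun s hs => by
      rw [Set.uIcc_of_le zero_le_one] at hs
      have hz := (segment_pos hx hy hs).ne'
      have h1 : HasDerivAt (fun s : ℝ => s * x + (1 - s) * y) (1 * x + (-1) * y) s :=
        ((hasDerivAt_id s).mul_const x).add (((hasDerivAt_id s).const_sub 1).mul_const y)
      have h2 := ((h1.log hz).const_mul x).sub ((hasDerivAt_id s).mul_const (x - y))
      refine h2.congr_deriv ?_
      generalize hzdef : s * x + (1 - s) * y = z at hz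
      field_simp
      rw [← hzdef]
      ring)
    (continuousOn_integrand hx hy).intervalIntegrable
  rw [key]
  simp
  ring

lemma kronSegment_posDef {A : Matrix d d ℂ} {B : Matrix e e ℂ} (hA : A.PosDef) (hB : B.PosDef)
    {s : ℝ} (hs : s ∈ Set.Icc (0 : ℝ) 1) : (kronSegment A B s).PosDef := by
  obtain ⟨W, x, y, hW, hx, hy, -, -, hZ⟩ := exists_joint_conjDiag hA hB
  rw [hZ]
  exact conjDiag_posDef hW fun p => segment_pos (hx p) (hy p) hs

lemma entropyTerm_isHermitian {A : Matrix d d ℂ} {B : Matrix e e ℂ} (hA : A.PosDef)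
    (hB : B.PosDef) : (entropyTerm A B).IsHermitian := by
  obtain ⟨W, x, y, -, -, -, hE, -, -⟩ := exists_joint_conjDiag hA hB
  rw [hE]
  exact conjDiag_isHermitian _ _

lemma kronDiff_isHermitian {A : Matrix d d ℂ} {B : Matrix e e ℂ} (hA : A.PosDef)
    (hB : B.PosDef) : (kronDiff A B).IsHermitian := by
  obtain ⟨W, x, y, -, -, -, -, hD, -⟩ := exists_joint_conjDiag hA hB
  rw [hD]
  exact conjDiag_isHermitian _ _

/-- The integral representation `A log A ⊗ 1 - A ⊗ log B = D + ∫₀¹ (1 - s) D Z_s⁻¹ D ds`, at the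
level of quadratic forms. Integrability is part of the conclusion, so that the integral does not
take its junk value. -/
lemma quad_entropyTerm {A : Matrix d d ℂ} {B : Matrix e e ℂ} (hA : A.PosDef) (hB : B.PosDef)
    (v : d × e → ℂ) :
    IntervalIntegrable (fun s : ℝ => (1 - s) *
      quad (kronDiff A B * (kronSegment A B s)⁻¹ * kronDiff A B) v) MeasureTheory.volume 0 1 ∧
    quad (entropyTerm A B) v = quad (kronDiff A B) v + ∫ s in (0 : ℝ)..1, (1 - s) *
      quad (kronDiff A B * (kronSegment A B s)⁻¹ * kronDiff A B) v := by
  obtain ⟨W, x, y, hW, hx, hy, hE, hD, hZ⟩ := exists_joint_conjDiag hA hB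
  have hQ : Set.EqOn (fun s : ℝ => ∑ p, ((1 - s) * ((x p - y p) *
        (s * x p + (1 - s) * y p)⁻¹ * (x p - y p))) * Complex.normSq ((Wᴴ *ᵥ v) p))
      (fun s : ℝ => (1 - s) *
        quad (kronDiff A B * (kronSegment A B s)⁻¹ * kronDiff A B) v) (Set.uIcc 0 1) := by
    intro s hs
    rw [Set.uIcc_of_le zero_le_one] at hs
    simp only [hD, hZ, conjDiag_inv hW (fun p => segment_pos (hx p) (hy p) hs), conjDiag_mul hW,
      quad_conjDiag, Finset.mul_sum, mul_assoc]
  have hint : ∀ p, IntervalIntegrable (fun s : ℝ => ((1 - s) * ((x p - y p) *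
        (s * x p + (1 - s) * y p)⁻¹ * (x p - y p))) * Complex.normSq ((Wᴴ *ᵥ v) p))
      MeasureTheory.volume 0 1 := fun p =>
    ((continuousOn_integrand (hx p) (hy p)).intervalIntegrable).mul_const _
  constructor
  · refine IntervalIntegrable.congr (fun s hs => hQ (Set.uIoc_subset_uIcc hs)) ?_
    exact (IntervalIntegrable.sum Finset.univ (fun p _ => hint p)).congr
      (fun s _ => by simp [Finset.sum_apply])
  · rw [← intervalIntegral.integral_congr hQ,
      intervalIntegral.integral_finsetSum (fun p _ => hint p), hE, hD, quad_conjDiag,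
      quad_conjDiag, ← Finset.sum_add_distrib]
    refine Finset.sum_congr rfl fun p _ => ?_
    rw [intervalIntegral.integral_mul_const, mul_log_sub_eq_integral (hx p) (hy p)]
    ring

/-! ### Joint convexity -/

/-- Joint operator convexity of `(D, Z) ↦ D Z⁻¹ D`. -/
lemma schur_jointly_convex {D₁ D₂ Z₁ Z₂ : Matrix d d ℂ} (hD₁ : D₁.IsHermitian)
    (hD₂ : D₂.IsHermitian) (hZ₁ : Z₁.PosDef) (hZ₂ : Z₂.PosDef) {a b : ℂ} (ha : 0 ≤ a) (hb : 0 ≤ b)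
    (hZ : (a • Z₁ + b • Z₂).PosDef) :
    (a • (D₁ * Z₁⁻¹ * D₁) + b • (D₂ * Z₂⁻¹ * D₂) -
      (a • D₁ + b • D₂) * (a • Z₁ + b • Z₂)⁻¹ * (a • D₁ + b • D₂)).PosSemidef := by
  have hblock : ∀ {D Z : Matrix d d ℂ}, D.IsHermitian → Z.PosDef →
      (fromBlocks Z D D (D * Z⁻¹ * D)).PosSemidef := by
    intro D Z hD hZ
    have : Invertible Z := hZ.isUnit.invertible
    have h := (PosDef.fromBlocks₁₁ D (D * Z⁻¹ * D) hZ).mpr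
      (by rw [hD.eq, sub_self]; exact PosSemidef.zero)
    rwa [hD.eq] at h
  have h := ((hblock hD₁ hZ₁).smul ha).add ((hblock hD₂ hZ₂).smul hb)
  rw [fromBlocks_smul, fromBlocks_smul, fromBlocks_add] at h
  have hD : (a • D₁ + b • D₂)ᴴ = a • D₁ + b • D₂ := by
    have h2 : ∀ {c : ℂ}, 0 ≤ c → star c = c := fun hc => (IsSelfAdjoint.of_nonneg hc)
    rw [conjTranspose_add, conjTranspose_smul, conjTranspose_smul, hD₁.eq, hD₂.eq, h2 ha, h2 hb]
  have : Invertible (a • Z₁ + b • Z₂) := hZ.isUnit.invertible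
  have h' := PosDef.fromBlocks₁₁ (a • D₁ + b • D₂)
    (a • (D₁ * Z₁⁻¹ * D₁) + b • (D₂ * Z₂⁻¹ * D₂)) hZ
  rw [hD] at h'
  exact h'.mp h

lemma posDef_convexComb {A₁ A₂ : Matrix d d ℂ} (h₁ : A₁.PosDef) (h₂ : A₂.PosDef) {l : ℝ}
    (hl0 : 0 ≤ l) (hl1 : l ≤ 1) : ((l : ℂ) • A₁ + ((1 - l : ℝ) : ℂ) • A₂).PosDef := by
  rcases hl0.eq_or_lt with rfl | hl
  · simpa using h₂
  · exact (h₁.smul (by exact_mod_cast hl)).add_posSemidef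
      (h₂.posSemidef.smul (by exact_mod_cast sub_nonneg.mpr hl1))

lemma kronDiff_convexComb (A₁ A₂ : Matrix d d ℂ) (B₁ B₂ : Matrix e e ℂ) (a b : ℂ) :
    kronDiff (a • A₁ + b • A₂) (a • B₁ + b • B₂) = a • kronDiff A₁ B₁ + b • kronDiff A₂ B₂ := by
  simp only [kronDiff, add_kronecker, kronecker_add, smul_kronecker, kronecker_smul]
  module

lemma kronSegment_convexComb (A₁ A₂ : Matrix d d ℂ) (B₁ B₂ : Matrix e e ℂ) (a b : ℂ) (s : ℝ) :
    kronSegment (a • A₁ + b • A₂) (a • B₁ + b • B₂) s =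
      a • kronSegment A₁ B₁ s + b • kronSegment A₂ B₂ s := by
  simp only [kronSegment, add_kronecker, kronecker_add, smul_kronecker, kronecker_smul]
  module

/-- The convexity of `entropyTerm` for arbitrary finite index types: the integral representations of
the three terms are compared pointwise in `s`. -/
lemma entropyTerm_jointly_convex {A₁ A₂ : Matrix d d ℂ} {B₁ B₂ : Matrix e e ℂ}
    (hA₁ : A₁.PosDef) (hA₂ : A₂.PosDef) (hB₁ : B₁.PosDef) (hB₂ : B₂.PosDef)
    {l : ℝ} (hl0 : 0 ≤ l) (hl1 : l ≤ 1) :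
    ((l : ℂ) • entropyTerm A₁ B₁ + ((1 - l : ℝ) : ℂ) • entropyTerm A₂ B₂ -
      entropyTerm ((l : ℂ) • A₁ + ((1 - l : ℝ) : ℂ) • A₂)
        ((l : ℂ) • B₁ + ((1 - l : ℝ) : ℂ) • B₂)).PosSemidef := by
  have hA := posDef_convexComb hA₁ hA₂ hl0 hl1
  have hB := posDef_convexComb hB₁ hB₂ hl0 hl1
  have hsmul : ∀ (c : ℝ) {M : Matrix (d × e) (d × e) ℂ}, M.IsHermitian →
      ((c : ℂ) • M).IsHermitian := fun c M hM => by
    rw [Matrix.IsHermitian, conjTranspose_smul, hM.eq]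
    simp
  refine posSemidef_of_quad_nonneg (((hsmul l (entropyTerm_isHermitian hA₁ hB₁)).add
    (hsmul (1 - l) (entropyTerm_isHermitian hA₂ hB₂))).sub (entropyTerm_isHermitian hA hB))
    fun v => ?_
  obtain ⟨hi₁, h₁⟩ := quad_entropyTerm hA₁ hB₁ v
  obtain ⟨hi₂, h₂⟩ := quad_entropyTerm hA₂ hB₂ v
  obtain ⟨hi, h⟩ := quad_entropyTerm hA hB v
  have hmono := intervalIntegral.integral_mono_on zero_le_one hi
    ((hi₁.const_mul l).add (hi₂.const_mul (1 - l))) (fun s hs => by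
      have hZ := kronSegment_posDef hA hB hs
      rw [kronSegment_convexComb] at hZ
      have hq := quad_nonneg (schur_jointly_convex (kronDiff_isHermitian hA₁ hB₁)
        (kronDiff_isHermitian hA₂ hB₂) (kronSegment_posDef hA₁ hB₁ hs)
        (kronSegment_posDef hA₂ hB₂ hs) (by exact_mod_cast hl0)
        (by exact_mod_cast sub_nonneg.mpr hl1) hZ) v
      rw [← kronSegment_convexComb, ← kronDiff_convexComb, quad_sub, quad_add, quad_smul,
        quad_smul] at hq
      have := mul_nonneg (sub_nonneg.mpr hs.2) hq
      linarith)
  rw [intervalIntegral.integral_add (hi₁.const_mul l) (hi₂.const_mul (1 - l)),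
    intervalIntegral.integral_const_mul, intervalIntegral.integral_const_mul,
    kronDiff_convexComb] at hmono
  rw [quad_sub, quad_add, quad_smul, quad_smul, h₁, h₂, h, kronDiff_convexComb, quad_add,
    quad_smul, quad_smul]
  linarith

end RelativeOperatorEntropy

/-- **Joint operator convexity of `(A,B) ↦ A·log A ⊗ 1 - A ⊗ log B`** on positive
definite matrices, in the Loewner order. -/
theorem relative_operator_entropy_jointly_convex {n m : ℕ}
    (A₁ A₂ : Matrix (Fin n) (Fin n) ℂ) (B₁ B₂ : Matrix (Fin m) (Fin m) ℂ)
    (hA₁ : A₁.PosDef) (hA₂ : A₂.PosDef) (hB₁ : B₁.PosDef) (hB₂ : B₂.PosDef)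
    (l : ℝ) (hl0 : 0 ≤ l) (hl1 : l ≤ 1) :
    ((l : ℂ) • ((A₁ * mlog A₁) ⊗ₖ (1 : Matrix (Fin m) (Fin m) ℂ) - A₁ ⊗ₖ mlog B₁) +
      ((1 - l : ℝ) : ℂ) • ((A₂ * mlog A₂) ⊗ₖ (1 : Matrix (Fin m) (Fin m) ℂ) - A₂ ⊗ₖ mlog B₂) -
      ((((l : ℂ) • A₁ + ((1 - l : ℝ) : ℂ) • A₂) *
          mlog ((l : ℂ) • A₁ + ((1 - l : ℝ) : ℂ) • A₂)) ⊗ₖ (1 : Matrix (Fin m) (Fin m) ℂ) -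
        ((l : ℂ) • A₁ + ((1 - l : ℝ) : ℂ) • A₂) ⊗ₖ
          mlog ((l : ℂ) • B₁ + ((1 - l : ℝ) : ℂ) • B₂))).PosSemidef := by
  exact entropyTerm_jointly_convex hA₁ hA₂ hB₁ hB₂ hl0 hl1
end

section
/- Strong subadditivity of the von Neumann entropy: let A, B, C be nonempty finite types and ρ a density matrix indexed by A × B × C. Let ρ_AB, ρ_BC and ρ_B denote the partial traces of ρ over C, over A, and over both A and C respectively, and define the von Neumann entropy of a positive semidefinite matrix M by H(M) = −Re tr(M · log M). Then H(ρ) + H(ρ_B) ≤ H(ρ_AB) + H(ρ_BC). -/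
/-!
Write `D(ρ‖σ) = tr(ρ log ρ) - tr(ρ log σ)`. Strong subadditivity is the monotonicity
`D(ρ_AB ‖ 1_A ⊗ ρ_B) ≤ D(ρ ‖ 1_A ⊗ ρ_BC)` under the partial trace over `C`, because
`tr(M log (1 ⊗ tr_A M)) = -H(tr_A M)` (`trace_mul_log_one_kronecker`).

For the monotonicity (`relEntropy_mono`), let `ρ` and `σ` have eigenvalues `pᵢ`, `qⱼ` and squared
eigenvector overlaps `wᵢⱼ`. The function `g(s) = ∑ᵢⱼ pᵢ wᵢⱼ log(s pᵢ + qⱼ)` (`logG`) tends to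
`tr(ρ log σ)` as `s → 0⁺`, while `g(s) - tr(ρ) log s` tends to `tr(ρ log ρ)` as `s → ∞`. Hence
`D(ρ‖σ) - D(ρ'‖σ')`, for marginals `ρ'`, `σ'`, is the total increase over `(0, ∞)` of `g - g'`,
where `g'` is formed from `ρ'`, `σ'`, and it suffices that the derivative of `g'` is at most that of `g`.
The derivative of `g` is `∑ᵢⱼ pᵢ² wᵢⱼ / (s pᵢ + qⱼ)` (`quadQ`), which by completing squares in the
eigenbases is the maximum over matrices `X` of
`2 Re tr(ρX) - s tr(ρXᴴX) - tr(σXXᴴ)` (`varF_le`, `exists_varF_eq`). The value of this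
functional at `X ⊗ 1` for `ρ, σ` equals its value at `X` for the marginals, so passing to marginals
can only decrease the maximum.

No invertibility is assumed: the limit at `0⁺` only requires `ker σ ⊆ ker ρ`, which holds for
`σ = 1 ⊗ tr_A ρ` (`ker_one_kronecker_ptrFst`).
-/

open Matrix
open scoped ComplexOrder

/-- The von Neumann entropy `H(M) = - Re tr (M log M)`. -/
noncomputable def vnEntropy {d : Type*} [Fintype d] [DecidableEq d]
    (M : Matrix d d ℂ) : ℝ :=
  -(((M * mlog M).trace).re)

section Auxiliary

set_option linter.unusedSectionVars false

open Set Filter Topology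
open scoped Kronecker

/-! ### Spectral sums and the variational formula -/

section Spectral

variable {n : Type*} [Fintype n] [DecidableEq n]

/-- `M = U diag(p) Uᴴ` with `U` unitary and `p` real: a spectral decomposition of `M`. -/
structure SpectralDecomp (M U : Matrix n n ℂ) (p : n → ℝ) : Prop where
  left : Uᴴ * U = 1
  right : U * Uᴴ = 1
  eq : M = U * diagonal (fun i => (p i : ℂ)) * Uᴴ

/-- The squared overlap `|⟨eᵢ, fⱼ⟩|²` of the columns of `U` and `V`. -/
noncomputable def overlap (U V : Matrix n n ℂ) (i j : n) : ℝ :=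
  Complex.normSq ((Uᴴ * V) i j)

/-- The variational functional `X ↦ 2 Re tr(ρX) - s Re tr(ρXᴴX) - Re tr(σXXᴴ)`. -/
noncomputable def varF (s : ℝ) (ρ σ X : Matrix n n ℂ) : ℝ :=
  2 * ((ρ * X).trace).re - s * ((ρ * (Xᴴ * X)).trace).re - ((σ * (X * Xᴴ)).trace).re

lemma sum_overlap_right {U V : Matrix n n ℂ} (hU : Uᴴ * U = 1) (hV : V * Vᴴ = 1) (i : n) :
    ∑ j, overlap U V i j = 1 := by
  have h : ((Uᴴ * V) * (Uᴴ * V)ᴴ) i i = 1 := by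
    rw [conjTranspose_mul, conjTranspose_conjTranspose, Matrix.mul_assoc, ← Matrix.mul_assoc V,
      hV, Matrix.one_mul, hU, one_apply_eq]
  rw [mul_apply] at h
  have h2 := congrArg Complex.re h
  simpa [conjTranspose_apply, Complex.mul_conj, overlap, -conjTranspose_mul] using h2

/-- In coordinates adapted to both spectral decompositions the functional decouples. -/
lemma varF_coord {ρ σ U V : Matrix n n ℂ} {p q : n → ℝ} (hρ : SpectralDecomp ρ U p)
    (hσ : SpectralDecomp σ V q) (s : ℝ) (Y : Matrix n n ℂ) :
    varF s ρ σ (V * Y * Uᴴ) = ∑ i, ∑ j, (2 * p i * ((Uᴴ * V) i j * Y j i).re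
      - (s * p i + q j) * Complex.normSq (Y j i)) := by
  have e1 : (ρ * (V * Y * Uᴴ)).trace = (diagonal (fun i => (p i : ℂ)) * ((Uᴴ * V) * Y)).trace := by
    rw [hρ.eq, ← Matrix.mul_assoc _ (V * Y) Uᴴ, trace_mul_comm]
    simp only [← Matrix.mul_assoc]
    rw [hρ.left, Matrix.one_mul]
  have e2 : (ρ * ((V * Y * Uᴴ)ᴴ * (V * Y * Uᴴ))).trace
      = (diagonal (fun i => (p i : ℂ)) * (Yᴴ * Y)).trace := by
    have : (V * Y * Uᴴ)ᴴ * (V * Y * Uᴴ) = U * (Yᴴ * Y) * Uᴴ := by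
      simp only [conjTranspose_mul, conjTranspose_conjTranspose, Matrix.mul_assoc]
      rw [← Matrix.mul_assoc Vᴴ V, hσ.left, Matrix.one_mul]
    rw [this, hρ.eq, ← Matrix.mul_assoc, trace_mul_comm]
    simp only [← Matrix.mul_assoc]
    rw [hρ.left, Matrix.one_mul, Matrix.mul_assoc (diagonal _) Uᴴ U, hρ.left, Matrix.mul_one]
  have e3 : (σ * ((V * Y * Uᴴ) * (V * Y * Uᴴ)ᴴ)).trace
      = (diagonal (fun i => (q i : ℂ)) * (Y * Yᴴ)).trace := by
    have : (V * Y * Uᴴ) * (V * Y * Uᴴ)ᴴ = V * (Y * Yᴴ) * Vᴴ := by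
      simp only [conjTranspose_mul, conjTranspose_conjTranspose, Matrix.mul_assoc]
      rw [← Matrix.mul_assoc Uᴴ U, hρ.left, Matrix.one_mul]
    rw [this, hσ.eq, ← Matrix.mul_assoc, trace_mul_comm]
    simp only [← Matrix.mul_assoc]
    rw [hσ.left, Matrix.one_mul, Matrix.mul_assoc (diagonal _) Vᴴ V, hσ.left, Matrix.mul_one]
  have f1 : ((diagonal (fun i => (p i : ℂ)) * ((Uᴴ * V) * Y)).trace).re
      = ∑ i, ∑ j, p i * ((Uᴴ * V) i j * Y j i).re := by
    rw [trace, Complex.re_sum]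
    refine Finset.sum_congr rfl fun i _ => ?_
    rw [diag_apply, diagonal_mul, mul_apply, Complex.re_ofReal_mul, Complex.re_sum, Finset.mul_sum]
  have f2 : ((diagonal (fun i => (p i : ℂ)) * (Yᴴ * Y)).trace).re
      = ∑ i, ∑ j, p i * Complex.normSq (Y j i) := by
    rw [trace, Complex.re_sum]
    refine Finset.sum_congr rfl fun i _ => ?_
    rw [diag_apply, diagonal_mul, mul_apply, Complex.re_ofReal_mul, Complex.re_sum, Finset.mul_sum]
    refine Finset.sum_congr rfl fun j _ => ?_
    rw [conjTranspose_apply, Complex.star_def, ← Complex.normSq_eq_conj_mul_self,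
      Complex.ofReal_re]
  have f3 : ((diagonal (fun i => (q i : ℂ)) * (Y * Yᴴ)).trace).re
      = ∑ i, ∑ j, q j * Complex.normSq (Y j i) := by
    rw [Finset.sum_comm, trace, Complex.re_sum]
    refine Finset.sum_congr rfl fun i _ => ?_
    rw [diag_apply, diagonal_mul, mul_apply, Complex.re_ofReal_mul, Complex.re_sum, Finset.mul_sum]
    refine Finset.sum_congr rfl fun j _ => ?_
    rw [conjTranspose_apply, Complex.star_def, Complex.mul_conj, Complex.ofReal_re]
  rw [varF, e1, e2, e3, f1, f2, f3]
  simp only [Finset.mul_sum, ← Finset.sum_sub_distrib]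
  refine Finset.sum_congr rfl fun i _ => Finset.sum_congr rfl fun j _ => ?_
  ring

/-- For `s > 0` and `p, q ≥ 0`, the maximum of `varF s ρ σ` in spectral coordinates. A vanishing
denominator forces `p i = 0`, so the junk value `0 / 0 = 0` is the right one. -/
noncomputable def quadQ (s : ℝ) (U V : Matrix n n ℂ) (p q : n → ℝ) : ℝ :=
  ∑ i, ∑ j, p i ^ 2 * overlap U V i j / (s * p i + q j)

lemma varF_le {ρ σ U V : Matrix n n ℂ} {p q : n → ℝ} (hρ : SpectralDecomp ρ U p)
    (hσ : SpectralDecomp σ V q) (hp : ∀ i, 0 ≤ p i) (hq : ∀ i, 0 ≤ q i) {s : ℝ} (hs : 0 < s)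
    (X : Matrix n n ℂ) :
    varF s ρ σ X ≤ quadQ s U V p q := by
  have hX : X = V * (Vᴴ * X * U) * Uᴴ := by
    simp only [Matrix.mul_assoc]
    rw [hρ.right, Matrix.mul_one, ← Matrix.mul_assoc, hσ.right, Matrix.one_mul]
  rw [hX, varF_coord hρ hσ]
  generalize Vᴴ * X * U = Y
  refine Finset.sum_le_sum fun i _ => Finset.sum_le_sum fun j _ => ?_
  rcases (hp i).eq_or_lt with h0 | h0
  · simpa [← h0] using mul_nonneg (hq j) (Complex.normSq_nonneg (Y j i))
  have ha : 0 < s * p i + q j := by have := hq j; positivity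
  rw [le_div_iff₀ ha, overlap]
  set a := s * p i + q j
  set c := (Uᴴ * V) i j
  simp only [Complex.normSq_apply, Complex.mul_re]
  -- completing the square: `|p c̄ - a y|² ≥ 0`
  nlinarith [sq_nonneg (p i * c.re - a * (Y j i).re), sq_nonneg (p i * c.im + a * (Y j i).im)]

lemma exists_varF_eq {ρ σ U V : Matrix n n ℂ} {p q : n → ℝ} (hρ : SpectralDecomp ρ U p)
    (hσ : SpectralDecomp σ V q) (hp : ∀ i, 0 ≤ p i) (hq : ∀ i, 0 ≤ q i) {s : ℝ} (hs : 0 < s) :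
    ∃ X, varF s ρ σ X = quadQ s U V p q := by
  refine ⟨V * (Matrix.of fun j i => ((p i / (s * p i + q j) : ℝ) : ℂ) *
    (starRingEnd ℂ) ((Uᴴ * V) i j)) * Uᴴ, ?_⟩
  rw [varF_coord hρ hσ]
  refine Finset.sum_congr rfl fun i _ => Finset.sum_congr rfl fun j _ => ?_
  rcases (hp i).eq_or_lt with h0 | h0
  · simp [← h0]
  have ha : 0 < s * p i + q j := by have := hq j; positivity
  rw [of_apply, overlap, mul_left_comm, Complex.mul_conj, Complex.normSq_mul, Complex.normSq_conj,
    Complex.normSq_ofReal, ← Complex.ofReal_mul, Complex.ofReal_re]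
  field_simp
  ring

/-- For `p, q ≥ 0`, a primitive of `s ↦ quadQ s U V p q` on `(0, ∞)`. -/
noncomputable def logG (U V : Matrix n n ℂ) (p q : n → ℝ) (s : ℝ) : ℝ :=
  ∑ i, ∑ j, p i * overlap U V i j * Real.log (s * p i + q j)

lemma hasDerivAt_logG (U V : Matrix n n ℂ) {p q : n → ℝ} (hp : ∀ i, 0 ≤ p i) (hq : ∀ i, 0 ≤ q i)
    {s : ℝ} (hs : 0 < s) : HasDerivAt (logG U V p q) (quadQ s U V p q) s := by
  unfold logG quadQ
  refine HasDerivAt.fun_sum fun i _ => HasDerivAt.fun_sum fun j _ => ?_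
  rcases (hp i).eq_or_lt with h0 | h0
  · simpa [← h0] using hasDerivAt_const s (0 : ℝ)
  have ha : 0 < s * p i + q j := by have := hq j; positivity
  have h : HasDerivAt (fun s => Real.log (s * p i + q j)) (1 * p i / (s * p i + q j)) s :=
    (((hasDerivAt_id s).mul_const (p i)).add_const (q j)).log ha.ne'
  refine (h.const_mul (p i * overlap U V i j)).congr_deriv ?_
  ring

/-- The limit at `0⁺` is `tr(ρ log σ)`; this needs the support of `ρ` to lie in that of `σ`. -/
lemma tendsto_logG_zero (U V : Matrix n n ℂ) {p q : n → ℝ}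
    (hsupp : ∀ i j, q j = 0 → p i * overlap U V i j = 0) :
    Tendsto (logG U V p q) (𝓝[>] 0) (𝓝 (∑ i, ∑ j, p i * overlap U V i j * Real.log (q j))) := by
  refine tendsto_finsetSum _ fun i _ => tendsto_finsetSum _ fun j _ => ?_
  by_cases h : q j = 0
  · simp [hsupp i j h]
  refine Tendsto.const_mul _ ?_
  have hc : ContinuousAt (fun s : ℝ => Real.log (s * p i + q j)) 0 :=
    ContinuousAt.log (by fun_prop) (by simpa using h)
  have := hc.tendsto
  simp only [zero_mul, zero_add] at this
  exact this.mono_left nhdsWithin_le_nhds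

/-- The constant term at `∞` is `tr(ρ log ρ)`, the coefficient of `log s` being `tr ρ`. -/
lemma tendsto_logG_atTop {U V : Matrix n n ℂ} (hU : Uᴴ * U = 1) (hV : V * Vᴴ = 1) {p q : n → ℝ}
    (hp : ∀ i, 0 ≤ p i) (hq : ∀ i, 0 ≤ q i) :
    Tendsto (fun s => logG U V p q s - Real.log s * ∑ i, p i) atTop
      (𝓝 (∑ i, p i * Real.log (p i))) := by
  have key : ∀ s, logG U V p q s - Real.log s * ∑ i, p i
      = ∑ i, ∑ j, p i * overlap U V i j * (Real.log (s * p i + q j) - Real.log s) := by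
    intro s
    have : Real.log s * ∑ i, p i = ∑ i, ∑ j, p i * overlap U V i j * Real.log s := by
      rw [Finset.mul_sum]
      refine Finset.sum_congr rfl fun i _ => ?_
      rw [← Finset.sum_mul, ← Finset.mul_sum, sum_overlap_right hU hV]
      ring
    rw [this, logG]
    simp only [mul_sub, Finset.sum_sub_distrib]
  have lim : ∑ i, p i * Real.log (p i)
      = ∑ i, ∑ j, p i * overlap U V i j * Real.log (p i) := by
    refine Finset.sum_congr rfl fun i _ => ?_
    rw [← Finset.sum_mul, ← Finset.mul_sum, sum_overlap_right hU hV]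
    ring
  simp only [key]
  rw [lim]
  refine tendsto_finsetSum _ fun i _ => tendsto_finsetSum _ fun j _ => ?_
  rcases (hp i).eq_or_lt with h0 | h0
  · simp [← h0]
  refine Tendsto.const_mul _ ?_
  have h1 : Tendsto (fun s : ℝ => Real.log (p i + q j / s)) atTop (𝓝 (Real.log (p i))) := by
    have h2 : Tendsto (fun s : ℝ => p i + q j / s) atTop (𝓝 (p i + 0)) :=
      tendsto_const_nhds.add (tendsto_id.const_div_atTop (q j))
    rw [add_zero] at h2
    exact h2.log h0.ne'
  refine h1.congr' ?_
  filter_upwards [eventually_gt_atTop 0] with s hs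
  have ha : 0 < s * p i + q j := by have := hq j; positivity
  rw [← Real.log_div ha.ne' hs.ne']
  congr 1
  field_simp

/-- The spectral sum for `tr(ρ log σ)`. -/
lemma sum_overlap_eq_trace {ρ U V : Matrix n n ℂ} {p : n → ℝ} (hρ : SpectralDecomp ρ U p)
    (r : n → ℝ) :
    ∑ i, ∑ j, p i * overlap U V i j * r j
      = ((ρ * (V * diagonal (fun j => (r j : ℂ)) * Vᴴ)).trace).re := by
  have e : (ρ * (V * diagonal (fun j => (r j : ℂ)) * Vᴴ)).trace
      = (diagonal (fun i => (p i : ℂ)) *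
        ((Uᴴ * V) * diagonal (fun j => (r j : ℂ)) * (Uᴴ * V)ᴴ)).trace := by
    rw [hρ.eq, Matrix.mul_assoc, Matrix.mul_assoc, trace_mul_comm]
    simp only [conjTranspose_mul, conjTranspose_conjTranspose, Matrix.mul_assoc]
  rw [e, trace, Complex.re_sum]
  refine Finset.sum_congr rfl fun i _ => ?_
  rw [diag_apply, diagonal_mul, mul_apply, Complex.re_ofReal_mul, Complex.re_sum, Finset.mul_sum]
  refine Finset.sum_congr rfl fun j _ => ?_
  rw [mul_diagonal, conjTranspose_apply, Complex.star_def, mul_right_comm ((Uᴴ * V) i j),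
    Complex.mul_conj,
    ← Complex.ofReal_mul, Complex.ofReal_re, overlap]
  ring

lemma overlap_support {ρ σ U V : Matrix n n ℂ} {p q : n → ℝ} (hρ : SpectralDecomp ρ U p)
    (hσ : SpectralDecomp σ V q) (hker : ∀ f : n → ℂ, σ *ᵥ f = 0 → ρ *ᵥ f = 0) (i j : n)
    (hj : q j = 0) :
    p i * overlap U V i j = 0 := by
  have h1 : σ * V = V * diagonal (fun j => (q j : ℂ)) := by
    rw [hσ.eq, Matrix.mul_assoc, hσ.left, Matrix.mul_one]
  have h2 : σ *ᵥ (fun k => V k j) = 0 := by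
    ext k
    have := congrFun (congrFun h1 k) j
    rw [mul_diagonal, hj] at this
    simpa [mul_apply, mulVec, dotProduct] using this
  have h3 := hker _ h2
  have h4 : Uᴴ * (ρ * V) = diagonal (fun i => (p i : ℂ)) * (Uᴴ * V) := by
    rw [hρ.eq]
    simp only [← Matrix.mul_assoc]
    rw [hρ.left, Matrix.one_mul]
  have h5 := congrFun (congrFun h4 i) j
  have h6 : ∀ k, (ρ * V) k j = 0 := fun k => congrFun h3 k
  rw [diagonal_mul, mul_apply] at h5
  simp only [h6, mul_zero, Finset.sum_const_zero] at h5
  rcases mul_eq_zero.mp h5.symm with h | h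
  · simp [Complex.ofReal_eq_zero.mp h]
  · simp [overlap, h]

lemma SpectralDecomp.trace_eq {ρ U : Matrix n n ℂ} {p : n → ℝ} (h : SpectralDecomp ρ U p) :
    ρ.trace = ((∑ i, p i : ℝ) : ℂ) := by
  rw [h.eq, trace_mul_comm, ← Matrix.mul_assoc, h.left, Matrix.one_mul, trace_diagonal]
  push_cast
  rfl

end Spectral

/-! ### Monotonicity of the relative entropy -/

/-- Monotonicity of the relative entropy `tr(ρ log ρ) - tr(ρ log σ)`: if `ρ', σ'` are marginals of
`ρ, σ`, witnessed by a map `ι` on observables through which `varF` is preserved, then the relative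
entropy of `ρ', σ'` is at most that of `ρ, σ`. -/
lemma relEntropy_mono {n m : Type*} [Fintype n] [DecidableEq n] [Fintype m] [DecidableEq m]
    {ρ σ U V : Matrix n n ℂ} {p q : n → ℝ} {ρ' σ' U' V' : Matrix m m ℂ} {p' q' : m → ℝ}
    (hρ : SpectralDecomp ρ U p) (hσ : SpectralDecomp σ V q)
    (hρ' : SpectralDecomp ρ' U' p') (hσ' : SpectralDecomp σ' V' q')
    (hp : ∀ i, 0 ≤ p i) (hq : ∀ i, 0 ≤ q i) (hp' : ∀ i, 0 ≤ p' i) (hq' : ∀ i, 0 ≤ q' i)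
    (hker : ∀ f, σ *ᵥ f = 0 → ρ *ᵥ f = 0) (hker' : ∀ f, σ' *ᵥ f = 0 → ρ' *ᵥ f = 0)
    (htr : ρ.trace = ρ'.trace)
    (ι : Matrix m m ℂ → Matrix n n ℂ) (hι : ∀ s X, varF s ρ σ (ι X) = varF s ρ' σ' X) :
    (∑ i, p' i * Real.log (p' i)) -
        ((ρ' * (V' * diagonal (fun j => (Real.log (q' j) : ℂ)) * V'ᴴ)).trace).re ≤
      (∑ i, p i * Real.log (p i)) -
        ((ρ * (V * diagonal (fun j => (Real.log (q j) : ℂ)) * Vᴴ)).trace).re := by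
  have htr2 : ∑ i, p i = ∑ i, p' i := by
    rw [hρ.trace_eq, hρ'.trace_eq] at htr
    exact_mod_cast htr
  have hder : ∀ s ∈ Ioi (0 : ℝ), HasDerivAt (fun s => logG U V p q s - logG U' V' p' q' s)
      (quadQ s U V p q - quadQ s U' V' p' q') s := fun s hs =>
    (hasDerivAt_logG U V hp hq hs).sub (hasDerivAt_logG U' V' hp' hq' hs)
  have hmono : MonotoneOn (fun s => logG U V p q s - logG U' V' p' q' s) (Ioi 0) := by
    refine monotoneOn_of_deriv_nonneg (convex_Ioi 0)
      (fun s hs => (hder s hs).continuousAt.continuousWithinAt) ?_ ?_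
    · rw [interior_Ioi]
      exact fun s hs => (hder s hs).differentiableAt.differentiableWithinAt
    · rw [interior_Ioi]
      intro s hs
      rw [(hder s hs).deriv, sub_nonneg]
      -- every value of the functional for the marginals is also one of the functional for `ρ, σ`
      obtain ⟨X, hX⟩ := exists_varF_eq hρ' hσ' hp' hq' hs
      rw [← hX, ← hι]
      exact varF_le hρ hσ hp hq hs _
  have l0 := (tendsto_logG_zero U V (overlap_support hρ hσ hker)).sub
    (tendsto_logG_zero U' V' (overlap_support hρ' hσ' hker'))
  have l1 := (tendsto_logG_atTop hρ.left hσ.right hp hq).sub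
    (tendsto_logG_atTop hρ'.left hσ'.right hp' hq')
  simp only [htr2, sub_sub_sub_cancel_right] at l1
  have b0 := le_of_tendsto (b := logG U V p q 1 - logG U' V' p' q' 1) l0 (by
    filter_upwards [Ioo_mem_nhdsGT (zero_lt_one' ℝ)] with s hs
    exact hmono hs.1 (mem_Ioi.mpr one_pos) hs.2.le)
  have b1 := ge_of_tendsto (b := logG U V p q 1 - logG U' V' p' q' 1) l1 (by
    filter_upwards [eventually_ge_atTop 1] with s hs
    exact hmono (mem_Ioi.mpr one_pos) (mem_Ioi.mpr (one_pos.trans_le hs)) hs)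
  rw [sum_overlap_eq_trace hρ, sum_overlap_eq_trace hρ'] at b0
  linarith

/-! ### Entropy in terms of eigenvalues -/

section Entropy

variable {n : Type*} [Fintype n] [DecidableEq n]

lemma spectralDecomp_of_isHermitian {M : Matrix n n ℂ} (hM : M.IsHermitian) :
    SpectralDecomp M (hM.eigenvectorUnitary : Matrix n n ℂ) hM.eigenvalues where
  left := Unitary.coe_star_mul_self hM.eigenvectorUnitary
  right := Unitary.coe_mul_star_self hM.eigenvectorUnitary
  eq := hM.spectral_theorem

lemma mlog_eq {M : Matrix n n ℂ} (hM : M.IsHermitian) :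
    mlog M = (hM.eigenvectorUnitary : Matrix n n ℂ) *
      diagonal (fun i => (Real.log (hM.eigenvalues i) : ℂ)) *
      (hM.eigenvectorUnitary : Matrix n n ℂ)ᴴ := by
  rw [mlog, dif_pos hM]
  rfl

lemma vnEntropy_eq {M : Matrix n n ℂ} (hM : M.IsHermitian) :
    vnEntropy M = -∑ i, hM.eigenvalues i * Real.log (hM.eigenvalues i) := by
  have h := spectralDecomp_of_isHermitian hM
  rw [vnEntropy, mlog_eq hM, ← sum_overlap_eq_trace h]
  congr 1
  refine Finset.sum_congr rfl fun i _ => ?_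
  rw [Finset.sum_eq_single i]
  · simp [overlap, h.left]
  · intro j _ hij
    simp [overlap, h.left, one_apply_ne hij.symm]
  · simp

end Entropy

/-! ### Partial traces -/

section PartialTrace

variable {A D : Type*} [Fintype A] [DecidableEq A] [Fintype D] [DecidableEq D]

/-- The partial trace over the first factor. -/
noncomputable def ptrFst (M : Matrix (A × D) (A × D) ℂ) : Matrix D D ℂ :=
  Matrix.of fun x y => ∑ a, M (a, x) (a, y)

lemma ptrFst_posSemidef {M : Matrix (A × D) (A × D) ℂ} (hM : M.PosSemidef) :
    (ptrFst M).PosSemidef := by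
  have : ptrFst M = ∑ a, M.submatrix (fun x => (a, x)) (fun x => (a, x)) := by
    ext x y
    simp [ptrFst, Matrix.sum_apply]
  rw [this]
  exact posSemidef_sum _ fun a _ => hM.submatrix _

lemma trace_mul_one_kronecker (M : Matrix (A × D) (A × D) ℂ) (X : Matrix D D ℂ) :
    (M * ((1 : Matrix A A ℂ) ⊗ₖ X)).trace = (ptrFst M * X).trace := by
  simp only [trace, diag_apply, mul_apply, Fintype.sum_prod_type, kroneckerMap_apply, one_apply,
    ptrFst, of_apply, ite_mul, one_mul, zero_mul, mul_ite, mul_zero, Finset.sum_mul]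
  rw [Finset.sum_comm]
  refine Finset.sum_congr rfl fun x _ => ?_
  conv_rhs => rw [Finset.sum_comm]
  refine Finset.sum_congr rfl fun a _ => ?_
  rw [Finset.sum_comm]
  refine Finset.sum_congr rfl fun y _ => ?_
  simp

/-- A kernel vector `v` of the marginal of `M ≥ 0` yields the kernel vectors `a ⊗ v` of `M`, since
`⟨v, (tr_A M) v⟩ = ∑ₐ ⟨a ⊗ v, M (a ⊗ v)⟩` is a sum of nonnegative terms. -/
lemma mulVec_eq_zero_of_ptrFst {M : Matrix (A × D) (A × D) ℂ} (hM : M.PosSemidef) {v : D → ℂ}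
    (hv : ptrFst M *ᵥ v = 0) (a : A) : M *ᵥ (fun z => if z.1 = a then v z.2 else 0) = 0 := by
  have h0 : ∀ a : A, star (fun z : A × D => if z.1 = a then v z.2 else 0)
      ⬝ᵥ (M *ᵥ (fun z => if z.1 = a then v z.2 else 0))
      = ∑ x, ∑ y, star (v x) * (M (a, x) (a, y) * v y) := by
    intro a
    simp only [dotProduct, mulVec, Fintype.sum_prod_type, Pi.star_apply, apply_ite star, star_zero,
      ite_mul, zero_mul, mul_ite, mul_zero]
    rw [Finset.sum_comm]
    refine Finset.sum_congr rfl fun x _ => ?_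
    rw [Finset.sum_eq_single a (fun b _ hb => by simp [hb]) (by simp)]
    simp [Finset.mul_sum]
  have h : star v ⬝ᵥ (ptrFst M *ᵥ v) = ∑ a : A, star (fun z : A × D => if z.1 = a then v z.2 else 0)
      ⬝ᵥ (M *ᵥ (fun z => if z.1 = a then v z.2 else 0)) := by
    simp only [h0]
    rw [Finset.sum_comm]
    refine Finset.sum_congr rfl fun x _ => ?_
    rw [Finset.sum_comm, mulVec, dotProduct, Finset.mul_sum]
    refine Finset.sum_congr rfl fun y _ => ?_
    rw [ptrFst, of_apply, Finset.sum_mul, Finset.mul_sum]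
    rfl
  rw [hv, dotProduct_zero] at h
  have h2 := (Finset.sum_eq_zero_iff_of_nonneg
    (fun a _ => hM.dotProduct_mulVec_nonneg _)).mp h.symm a (Finset.mem_univ a)
  exact (hM.dotProduct_mulVec_zero_iff _).mp h2

/-- The support of `M ≥ 0` lies in that of `1 ⊗ tr_A M`. -/
lemma ker_one_kronecker_ptrFst {M : Matrix (A × D) (A × D) ℂ} (hM : M.PosSemidef) (f : A × D → ℂ)
    (hf : ((1 : Matrix A A ℂ) ⊗ₖ ptrFst M) *ᵥ f = 0) : M *ᵥ f = 0 := by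
  have h1 : ∀ a, ptrFst M *ᵥ (fun x => f (a, x)) = 0 := by
    intro a
    ext x
    have := congrFun hf (a, x)
    simpa [mulVec, dotProduct, Fintype.sum_prod_type, kroneckerMap_apply, one_apply,
      ite_mul] using this
  have h2 : f = ∑ a : A, fun z : A × D => if z.1 = a then f (a, z.2) else 0 := by
    ext z
    simp [Finset.sum_apply]
  rw [h2, mulVec_sum]
  exact Finset.sum_eq_zero fun a _ => mulVec_eq_zero_of_ptrFst hM (h1 a) a

lemma one_kronecker_diagonal (d : D → ℂ) :
    (1 : Matrix A A ℂ) ⊗ₖ diagonal d = diagonal fun z : A × D => d z.2 := by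
  rw [← diagonal_one, diagonal_kronecker_diagonal]
  simp

lemma SpectralDecomp.one_kronecker {N V : Matrix D D ℂ} {q : D → ℝ} (h : SpectralDecomp N V q) :
    SpectralDecomp ((1 : Matrix A A ℂ) ⊗ₖ N) ((1 : Matrix A A ℂ) ⊗ₖ V) (fun z => q z.2) where
  left := by
    rw [conjTranspose_kronecker, ← mul_kronecker_mul, h.left, conjTranspose_one, Matrix.one_mul,
      one_kronecker_one]
  right := by
    rw [conjTranspose_kronecker, ← mul_kronecker_mul, h.right, conjTranspose_one, Matrix.one_mul,
      one_kronecker_one]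
  eq := by
    rw [← one_kronecker_diagonal (fun x => (q x : ℂ)), conjTranspose_kronecker, ← mul_kronecker_mul,
      ← mul_kronecker_mul, conjTranspose_one, Matrix.one_mul, Matrix.one_mul, ← h.eq]

/-- `tr(M log(1 ⊗ tr_A M)) = -H(tr_A M)`. -/
lemma trace_mul_log_one_kronecker {M : Matrix (A × D) (A × D) ℂ}
    (hN : (ptrFst M).IsHermitian) :
    ((M * (((1 : Matrix A A ℂ) ⊗ₖ (hN.eigenvectorUnitary : Matrix D D ℂ)) *
      diagonal (fun z : A × D => (Real.log (hN.eigenvalues z.2) : ℂ)) *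
      ((1 : Matrix A A ℂ) ⊗ₖ (hN.eigenvectorUnitary : Matrix D D ℂ))ᴴ)).trace).re
      = -vnEntropy (ptrFst M) := by
  rw [← one_kronecker_diagonal (fun x => (Real.log (hN.eigenvalues x) : ℂ)),
    conjTranspose_kronecker, ← mul_kronecker_mul, ← mul_kronecker_mul, conjTranspose_one,
    Matrix.one_mul, Matrix.one_mul, ← mlog_eq hN, trace_mul_one_kronecker, vnEntropy, neg_neg]

variable {B C : Type*} [Fintype B] [DecidableEq B] [Fintype C] [DecidableEq C]

/-- The partial trace over the third of three factors. -/
noncomputable def ptrThd (M : Matrix (A × B × C) (A × B × C) ℂ) : Matrix (A × B) (A × B) ℂ :=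
  Matrix.of fun x y => ∑ c, M (x.1, x.2, c) (y.1, y.2, c)

lemma ptrThd_posSemidef {M : Matrix (A × B × C) (A × B × C) ℂ} (hM : M.PosSemidef) :
    (ptrThd M).PosSemidef := by
  have : ptrThd M = ∑ c, M.submatrix (fun x : A × B => (x.1, x.2, c))
      (fun x : A × B => (x.1, x.2, c)) := by
    ext x y
    simp [ptrThd, Matrix.sum_apply]
  rw [this]
  exact posSemidef_sum _ fun a _ => hM.submatrix _

lemma ptrThd_one_kronecker (M : Matrix (A × B × C) (A × B × C) ℂ) :
    ptrThd ((1 : Matrix A A ℂ) ⊗ₖ ptrFst M) = (1 : Matrix A A ℂ) ⊗ₖ ptrFst (ptrThd M) := by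
  ext x y
  simp only [ptrThd, ptrFst, of_apply, kroneckerMap_apply]
  rw [Finset.sum_comm, Finset.mul_sum]

/-- The observable `X ⊗ 1` on the three factors. -/
noncomputable def tensorOne (C : Type*) [DecidableEq C] (X : Matrix (A × B) (A × B) ℂ) :
    Matrix (A × B × C) (A × B × C) ℂ :=
  (X ⊗ₖ (1 : Matrix C C ℂ)).submatrix (Equiv.prodAssoc A B C).symm (Equiv.prodAssoc A B C).symm

lemma tensorOne_mul (X Y : Matrix (A × B) (A × B) ℂ) :
    tensorOne C X * tensorOne C Y = tensorOne C (X * Y) := by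
  rw [tensorOne, tensorOne, submatrix_mul_equiv, ← mul_kronecker_mul, Matrix.one_mul, tensorOne]

lemma tensorOne_conjTranspose (X : Matrix (A × B) (A × B) ℂ) :
    (tensorOne C X)ᴴ = tensorOne C Xᴴ := by
  rw [tensorOne, conjTranspose_submatrix, conjTranspose_kronecker, conjTranspose_one, tensorOne]

lemma trace_mul_tensorOne (M : Matrix (A × B × C) (A × B × C) ℂ) (X : Matrix (A × B) (A × B) ℂ) :
    (M * tensorOne C X).trace = (ptrThd M * X).trace := by
  simp only [trace, diag_apply, mul_apply, Fintype.sum_prod_type, tensorOne, submatrix_apply,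
    kroneckerMap_apply, one_apply, ptrThd, of_apply, Equiv.prodAssoc_symm_apply, mul_ite, mul_one,
    mul_zero, Finset.sum_mul]
  refine Finset.sum_congr rfl fun a _ => Finset.sum_congr rfl fun b _ => ?_
  rw [Finset.sum_comm]
  refine Finset.sum_congr rfl fun a' _ => ?_
  rw [Finset.sum_comm]
  refine Finset.sum_congr rfl fun b' _ => ?_
  simp

lemma varF_tensorOne (s : ℝ) (ρ σ : Matrix (A × B × C) (A × B × C) ℂ)
    (X : Matrix (A × B) (A × B) ℂ) :
    varF s ρ σ (tensorOne C X) = varF s (ptrThd ρ) (ptrThd σ) X := by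
  simp only [varF, tensorOne_conjTranspose, tensorOne_mul, trace_mul_tensorOne]

lemma trace_ptrThd (M : Matrix (A × B × C) (A × B × C) ℂ) : M.trace = (ptrThd M).trace := by
  simp [trace, ptrThd, Fintype.sum_prod_type]

end PartialTrace

end Auxiliary

/-- **Strong subadditivity of the von Neumann entropy**: for a density matrix `ρ` on
`A ⊗ B ⊗ C` with partial traces `ρ_AB`, `ρ_BC` and `ρ_B`,
`H(ρ) + H(ρ_B) ≤ H(ρ_AB) + H(ρ_BC)`. -/
theorem strong_subadditivity {A B C : Type*}
    [Fintype A] [DecidableEq A] [Nonempty A]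
    [Fintype B] [DecidableEq B] [Nonempty B]
    [Fintype C] [DecidableEq C] [Nonempty C]
    (ρ : Matrix (A × B × C) (A × B × C) ℂ) (hρ : ρ.PosSemidef) (hρ1 : ρ.trace = 1) :
    vnEntropy ρ +
      vnEntropy (Matrix.of fun b b' : B => ∑ a : A, ∑ c : C, ρ (a, b, c) (a, b', c)) ≤
    vnEntropy (Matrix.of fun x y : A × B => ∑ c : C, ρ (x.1, x.2, c) (y.1, y.2, c)) +
      vnEntropy (Matrix.of fun x y : B × C => ∑ a : A, ρ (a, x.1, x.2) (a, y.1, y.2)) := by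
  have hAB := ptrThd_posSemidef hρ
  have hBC := ptrFst_posSemidef hρ
  have hB := ptrFst_posSemidef hAB
  have hσ' := (spectralDecomp_of_isHermitian hB.isHermitian).one_kronecker (A := A)
  rw [← ptrThd_one_kronecker] at hσ'
  have h := relEntropy_mono (spectralDecomp_of_isHermitian hρ.isHermitian)
    ((spectralDecomp_of_isHermitian hBC.isHermitian).one_kronecker (A := A))
    (spectralDecomp_of_isHermitian hAB.isHermitian) hσ'
    hρ.eigenvalues_nonneg (fun _ => hBC.eigenvalues_nonneg _)
    hAB.eigenvalues_nonneg (fun _ => hB.eigenvalues_nonneg _)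
    (ker_one_kronecker_ptrFst hρ)
    (by rw [ptrThd_one_kronecker]; exact ker_one_kronecker_ptrFst hAB)
    (trace_ptrThd ρ) (tensorOne C) (fun s X => varF_tensorOne s _ _ X)
  rw [trace_mul_log_one_kronecker, trace_mul_log_one_kronecker] at h
  have e1 := vnEntropy_eq hρ.isHermitian
  have e2 := vnEntropy_eq hAB.isHermitian
  change vnEntropy ρ + vnEntropy (ptrFst (ptrThd ρ)) ≤ vnEntropy (ptrThd ρ) + vnEntropy (ptrFst ρ)
  linarith
end

section
/- Duality of the Petz conditional Rényi entropies of order α and 2−α for pure tripartite states: let A, B, C be nonempty finite types, v : A × B × C → ℂ a unit vector (∑_i |v i|² = 1), and ρ the rank-one matrix with entries ρ(i,j) = v i · conj(v j). Let ρ_AB, ρ_AC, ρ_B, ρ_C denote the partial traces of ρ over C, over B, over A and C, and over A and B respectively. Then for every α ∈ (0,2) with α ≠ 1, Re tr(ρ_AB^α · (1_A ⊗ ρ_B^{1−α})) = Re tr(ρ_AC^{2−α} · (1_A ⊗ ρ_C^{α−1})); equivalently, H̄_α↓(A|B)_ρ + H̄_{2−α}↓(A|C)_ρ = 0 for the Petz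 conditional Rényi entropies H̄_γ↓(A|D)_ρ = (1/(1−γ))·ln Re tr(ρ_AD^γ · (1_A ⊗ ρ_D^{1−γ})). -/
/-! Write `v` as a matrix `X` with rows `A × B` and columns `C`. Then `ρ_AB = X Xᴴ` and
`ρ_C = (Xᴴ X)ᵀ`, so the intertwining relation `f (X Xᴴ) X = X f (Xᴴ X)` gives
`ρ_AB ^ α = X (ρ_C ^ (α - 1))ᵀ Xᴴ` (`mpow_mul_conjTranspose`, `mpow_transpose`). Hence the left-hand
trace is the sum over `a, b, b', c, c'` of
`v (a, b, c) (ρ_C ^ (α - 1)) (c', c) conj (v (a, b', c')) (ρ_B ^ (1 - α)) (b', b)`.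
This expression is symmetric under swapping `(B, 1 - α)` with `(C, α - 1)`, and the right-hand trace
expands to the swapped sum.

The matrix identities are proved by interpolating `t ↦ t ^ c` by a real polynomial on the relevant
finite spectra. -/

open Matrix
open scoped ComplexOrder Kronecker

/-- A finite set of reals carries a polynomial that agrees on it with a prescribed function. -/
lemma exists_poly_eval_eq (S : Set ℝ) (hS : S.Finite) (f : ℝ → ℝ) :
    ∃ p : Polynomial ℝ, ∀ t ∈ S, p.eval t = f t :=
  ⟨Lagrange.interpolate hS.toFinset id f, fun _ ht =>
    Lagrange.eval_interpolate_at_node (s := hS.toFinset) (v := id) f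
      (fun _ _ _ _ h => h) (hS.mem_toFinset.2 ht)⟩

lemma mpow_eq_aeval {d : Type*} [Fintype d] [DecidableEq d] {M : Matrix d d ℂ}
    (hM : M.IsHermitian) (c : ℝ) (p : Polynomial ℝ)
    (hp : ∀ t ∈ spectrum ℝ M, p.eval t = t ^ c) : mpow M c = Polynomial.aeval M p := by
  have hM' : IsSelfAdjoint M := hM
  rw [mpow, dif_pos hM, ← hM.cfc_eq, ← cfc_polynomial p M hM']
  exact cfc_congr fun t ht => (hp t ht).symm

lemma aeval_transpose {d : Type*} [Fintype d] [DecidableEq d] (M : Matrix d d ℂ)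
    (p : Polynomial ℝ) : Polynomial.aeval Mᵀ p = (Polynomial.aeval M p)ᵀ := by
  induction p using Polynomial.induction_on' with
  | add p q hp hq => simp [hp, hq]
  | monomial n a =>
    simp [Polynomial.aeval_monomial, Algebra.algebraMap_eq_smul_one, Matrix.transpose_pow]

lemma mpow_transpose {d : Type*} [Fintype d] [DecidableEq d] {M : Matrix d d ℂ}
    (hM : M.IsHermitian) (c : ℝ) : mpow Mᵀ c = (mpow M c)ᵀ := by
  obtain ⟨p, hp⟩ := exists_poly_eval_eq (spectrum ℝ Mᵀ ∪ spectrum ℝ M) (Set.toFinite _)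
    (fun t => t ^ c)
  rw [mpow_eq_aeval hM c p fun t ht => hp t (Or.inr ht),
    mpow_eq_aeval hM.transpose c p fun t ht => hp t (Or.inl ht), aeval_transpose]

/-- The intertwining relation `p (X Xᴴ) X = X p (Xᴴ X)`. -/
lemma aeval_mul_conjTranspose_mul {m n : Type*} [Fintype m] [DecidableEq m] [Fintype n]
    [DecidableEq n] (X : Matrix m n ℂ) (p : Polynomial ℝ) :
    Polynomial.aeval (X * Xᴴ) p * X = X * Polynomial.aeval (Xᴴ * X) p := by
  induction p using Polynomial.induction_on' with
  | add p q hp hq => simp [hp, hq, Matrix.add_mul, Matrix.mul_add]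
  | monomial n a =>
    have h : (X * Xᴴ) ^ n * X = X * (Xᴴ * X) ^ n := by
      induction n with
      | zero => simp
      | succ n ih =>
        rw [pow_succ', pow_succ', Matrix.mul_assoc, ih]
        simp only [Matrix.mul_assoc]
    simp [Polynomial.aeval_monomial, Algebra.algebraMap_eq_smul_one, h]

/-- The case `t = 0` of `t ^ c * t = t ^ (c + 1)` is where `c + 1 ≠ 0` is needed. -/
lemma mpow_mul_conjTranspose {m n : Type*} [Fintype m] [DecidableEq m] [Fintype n]
    [DecidableEq n] (X : Matrix m n ℂ) (c : ℝ) (hc : c + 1 ≠ 0) :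
    mpow (X * Xᴴ) (c + 1) = X * mpow (Xᴴ * X) c * Xᴴ := by
  obtain ⟨p, hp⟩ := exists_poly_eval_eq (spectrum ℝ (X * Xᴴ) ∪ spectrum ℝ (Xᴴ * X))
    (Set.toFinite _) (fun t => t ^ c)
  rw [mpow_eq_aeval (isHermitian_conjTranspose_mul_self X) c p fun t ht => hp t (Or.inr ht),
    mpow_eq_aeval (isHermitian_mul_conjTranspose_self X) (c + 1) (p * Polynomial.X),
    ← aeval_mul_conjTranspose_mul, map_mul, Polynomial.aeval_X, Matrix.mul_assoc]
  intro t ht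
  have h0 : 0 ≤ t := by
    rw [(isHermitian_mul_conjTranspose_self X).spectrum_real_eq_range_eigenvalues] at ht
    obtain ⟨i, rfl⟩ := ht
    exact (posSemidef_self_mul_conjTranspose X).eigenvalues_nonneg i
  rw [Polynomial.eval_mul, Polynomial.eval_X, hp t (Or.inl ht), Real.rpow_add' h0 hc,
    Real.rpow_one]

/-- Expansion of the trace for one bipartite marginal. The statement uses an amplitude function
`w a d e` so that it applies to both orderings of the subsystems. -/
lemma trace_expand {A D E : Type*} [Fintype A] [DecidableEq A] [Fintype D] [DecidableEq D]
    [Fintype E] [DecidableEq E] (w : A → D → E → ℂ) (c : ℝ) (hc : c + 1 ≠ 0) (H : Matrix D D ℂ) :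
    (mpow (Matrix.of fun x y : A × D => ∑ e, w x.1 x.2 e * (starRingEnd ℂ) (w y.1 y.2 e)) (c + 1) *
        ((1 : Matrix A A ℂ) ⊗ₖ H)).trace =
      ∑ a, ∑ d, ∑ d', ∑ e, ∑ e', w a d e * (starRingEnd ℂ) (w a d' e') * H d' d *
        mpow (Matrix.of fun e e' : E => ∑ a, ∑ d, w a d e * (starRingEnd ℂ) (w a d e')) c e' e := by
  set X : Matrix (A × D) E ℂ := Matrix.of fun x e => w x.1 x.2 e with hX
  have h1 : (Matrix.of fun x y : A × D => ∑ e, w x.1 x.2 e * (starRingEnd ℂ) (w y.1 y.2 e))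
      = X * Xᴴ := by
    ext x y
    simp [hX, Matrix.mul_apply]
  have h2 : (Matrix.of fun e e' : E => ∑ a, ∑ d, w a d e * (starRingEnd ℂ) (w a d e'))
      = (Xᴴ * X)ᵀ := by
    ext e e'
    simp [hX, Matrix.mul_apply, Fintype.sum_prod_type, mul_comm]
  rw [h1, h2, mpow_mul_conjTranspose X c hc,
    mpow_transpose (isHermitian_conjTranspose_mul_self X)]
  generalize mpow (Xᴴ * X) c = G
  simp only [Matrix.trace, Matrix.diag_apply, Matrix.mul_apply, Fintype.sum_prod_type,
    Matrix.kroneckerMap_apply, Matrix.one_apply, Matrix.transpose_apply, hX, Matrix.of_apply,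
    Matrix.conjTranspose_apply, ite_mul, one_mul, zero_mul, mul_ite, mul_zero,
    Finset.sum_ite_irrel, Finset.sum_const_zero, Finset.sum_ite_eq', Finset.mem_univ, if_true,
    Finset.sum_mul]
  refine Finset.sum_congr rfl fun a _ => Finset.sum_congr rfl fun d _ =>
    Finset.sum_congr rfl fun d' _ => ?_
  rw [Finset.sum_comm]
  refine Finset.sum_congr rfl fun e _ => Finset.sum_congr rfl fun e' _ => ?_
  simp only [starRingEnd_apply]
  ring

/-- **Duality of the Petz conditional Rényi entropies of order `α` and `2 - α` for pure
tripartite states**: if `ρ = |v⟩⟨v|` for a unit vector `v` on `A ⊗ B ⊗ C`, then for all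
`α ∈ (0,2)` with `α ≠ 1`,
`Re tr (ρ_AB^α (1_A ⊗ ρ_B^(1-α))) = Re tr (ρ_AC^(2-α) (1_A ⊗ ρ_C^(α-1)))`,
i.e. `H̄_α↓(A|B)_ρ + H̄_(2-α)↓(A|C)_ρ = 0`. -/
theorem petz_renyi_duality {A B C : Type*}
    [Fintype A] [DecidableEq A] [Nonempty A]
    [Fintype B] [DecidableEq B] [Nonempty B]
    [Fintype C] [DecidableEq C] [Nonempty C]
    (v : A × B × C → ℂ) (hv : ∑ i, Complex.normSq (v i) = 1)
    (ρ : Matrix (A × B × C) (A × B × C) ℂ)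
    (hρ : ρ = Matrix.of fun i j => v i * (starRingEnd ℂ) (v j))
    (α : ℝ) (hα0 : 0 < α) (hα2 : α < 2) (hα1 : α ≠ 1) :
    ((mpow (Matrix.of fun x y : A × B => ∑ c : C, ρ (x.1, x.2, c) (y.1, y.2, c)) α *
        ((1 : Matrix A A ℂ) ⊗ₖ
          mpow (Matrix.of fun b b' : B => ∑ a : A, ∑ c : C, ρ (a, b, c) (a, b', c))
            (1 - α))).trace).re =
    ((mpow (Matrix.of fun x y : A × C => ∑ b : B, ρ (x.1, b, x.2) (y.1, b, y.2)) (2 - α) *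
        ((1 : Matrix A A ℂ) ⊗ₖ
          mpow (Matrix.of fun c c' : C => ∑ a : A, ∑ b : B, ρ (a, b, c) (a, b, c'))
            (α - 1))).trace).re := by
  subst hρ
  simp only [Matrix.of_apply]
  have h1 := trace_expand (fun a b c => v (a, b, c)) (α - 1) (by linarith)
    (mpow (Matrix.of fun b b' : B => ∑ a : A, ∑ c : C, v (a, b, c) *
      (starRingEnd ℂ) (v (a, b', c))) (1 - α))
  have h2 := trace_expand (fun a c b => v (a, b, c)) (1 - α) (by linarith)
    (mpow (Matrix.of fun c c' : C => ∑ a : A, ∑ b : B, v (a, b, c) *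
      (starRingEnd ℂ) (v (a, b, c'))) (α - 1))
  rw [show α - 1 + 1 = α by ring] at h1
  rw [show 1 - α + 1 = 2 - α by ring] at h2
  rw [h1, h2]
  congr 1
  refine Finset.sum_congr rfl fun a _ => ?_
  generalize mpow (Matrix.of fun c c' : C => ∑ a : A, ∑ b : B, v (a, b, c) *
      (starRingEnd ℂ) (v (a, b, c'))) (α - 1) = G
  generalize mpow (Matrix.of fun b b' : B => ∑ a : A, ∑ c : C, v (a, b, c) *
      (starRingEnd ℂ) (v (a, b', c))) (1 - α) = H
  -- Both sides are the same sum, with the orders `b, b', c, c'` and `c, c', b, b'`.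
  simp only [← Fintype.sum_prod_type']
  refine Fintype.sum_equiv
    ⟨fun x => (x.2.2.1, x.2.2.2, x.1, x.2.1), fun x => (x.2.2.1, x.2.2.2, x.1, x.2.1),
      fun _ => rfl, fun _ => rfl⟩ _ _ fun x => ?_
  simp only [Equiv.coe_fn_mk]
  ring
end

section
/- Smoothing lemma for the max-divergence: let ρ be an n×n positive semidefinite complex matrix with tr ρ ≤ 1, σ an n×n positive semidefinite complex matrix, and λ ∈ ℝ. Let Σ be the positive part of the Hermitian matrix ρ − e^λ·σ (obtained by applying t ↦ max(t,0) to its eigenvalues in a spectral decomposition) and let s = Re tr Σ. Then there exists an n×n positive semidefinite matrix ρ̃ with tr ρ̃ ≤ 1 such that ρ̃ ≤ e^λ·σ in the Loewner order and P(ρ̃, ρ) ≤ √(2s − s²), where P is the purified distance. -/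
/-!
Write `τ = e^l σ`, let `P` be the positive part of `ρ - τ`, put `S = τ + P ≥ ρ`, and let
`A = √τ`, `B = √S`. With `R` the Moore–Penrose inverse of `B`, the matrix `G = A R` is a contraction
with `G S Gᴴ = τ`, and the smoothed state is `G ρ Gᴴ`; it lies below `τ` because `ρ ≤ S`, and its
trace is at most that of `ρ`.

For the fidelity, `√ρ (G ρ Gᴴ) √ρ = X Xᴴ` with `X = √ρ G √ρ`, so the trace of its square root is at
least `Re tr X = Re tr (G ρ)` (`re_trace_le_trace_sqrt`). Since `2 - G - Gᴴ ≥ 0` and `ρ ≤ S`,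
`tr ρ - Re tr (G ρ) ≤ tr S - Re tr (G S) = tr S - Re tr (A B) ≤ tr S - tr τ = tr P = s`,
where `Re tr (A B) ≥ tr A²` is the trace form of monotonicity of the square root
(`re_trace_mul_self_le_of_sq_le`). Adding `√((1 - tr ρ̃)(1 - tr ρ)) ≥ 1 - tr ρ` shows that the root
of the fidelity is at least `1 - s`. Finally `s ≤ tr ρ ≤ 1`, so this bound may be squared.
-/

open Matrix
open scoped ComplexOrder

/-- Positive part of a Hermitian matrix via the spectral decomposition (junk value
`0` if the matrix is not Hermitian). -/
noncomputable def mposPart {d : Type*} [Fintype d] [DecidableEq d]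
    (M : Matrix d d ℂ) : Matrix d d ℂ :=
  if hM : M.IsHermitian then hM.cfc (fun t => max t 0) else 0

/-- The generalized fidelity of sub-normalized states. -/
noncomputable def gFidelity {d : Type*} [Fintype d] [DecidableEq d]
    (ρ τ : Matrix d d ℂ) : ℝ :=
  (((mpow (mpow τ (1/2) * ρ * mpow τ (1/2)) (1/2)).trace).re
    + Real.sqrt ((1 - ρ.trace.re) * (1 - τ.trace.re))) ^ 2

/-- The purified distance of sub-normalized states, `P(ρ,τ) = √(1 - F̄(ρ,τ))`. -/
noncomputable def purifiedDist {d : Type*} [Fintype d] [DecidableEq d]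
    (ρ τ : Matrix d d ℂ) : ℝ :=
  Real.sqrt (1 - gFidelity ρ τ)

section Aux

lemma PosSemidef.re_diag_nonneg {d : Type*} {M : Matrix d d ℂ} (hM : M.PosSemidef) (i : d) :
    0 ≤ (M i i).re :=
  (Complex.le_def.1 hM.diag_nonneg).1

lemma PosSemidef.re_trace_nonneg {d : Type*} [Fintype d] {M : Matrix d d ℂ} (hM : M.PosSemidef) :
    0 ≤ M.trace.re :=
  (Complex.le_def.1 hM.trace_nonneg).1

variable {d : Type*} [Fintype d] [DecidableEq d]

/-! ### Spectral calculus and square roots -/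

/-- Spectral decomposition of a Hermitian matrix together with its functional calculus, in terms of
plain matrix products. -/
lemma exists_unitary_diag {M : Matrix d d ℂ} (hM : M.IsHermitian) :
    ∃ U : Matrix d d ℂ, Uᴴ * U = 1 ∧ U * Uᴴ = 1 ∧
      M = U * diagonal (fun i => (hM.eigenvalues i : ℂ)) * Uᴴ ∧
      ∀ f : ℝ → ℝ, hM.cfc f = U * diagonal (fun i => (f (hM.eigenvalues i) : ℂ)) * Uᴴ := by
  refine ⟨hM.eigenvectorUnitary, ?_, ?_, ?_, ?_⟩
  · exact Unitary.coe_star_mul_self hM.eigenvectorUnitary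
  · exact Unitary.coe_mul_star_self hM.eigenvectorUnitary
  · conv_lhs => rw [hM.spectral_theorem, Unitary.conjStarAlgAut_apply]
    rfl
  · intro f
    rw [Matrix.IsHermitian.cfc, Unitary.conjStarAlgAut_apply]
    rfl

lemma conj_mul_conj {U : Matrix d d ℂ} (hU : Uᴴ * U = 1) (X Y : Matrix d d ℂ) :
    (U * X * Uᴴ) * (U * Y * Uᴴ) = U * (X * Y) * Uᴴ := by
  calc _ = U * X * (Uᴴ * U) * Y * Uᴴ := by noncomm_ring
    _ = _ := by rw [hU]; noncomm_ring

lemma trace_conj {U : Matrix d d ℂ} (hU : Uᴴ * U = 1) (X : Matrix d d ℂ) :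
    (U * X * Uᴴ).trace = X.trace := by
  rw [trace_mul_comm, ← mul_assoc, hU, one_mul]

lemma trace_conj' {U : Matrix d d ℂ} (hU : U * Uᴴ = 1) (X : Matrix d d ℂ) :
    (Uᴴ * X * U).trace = X.trace := by
  rw [trace_mul_comm, ← mul_assoc, hU, one_mul]

lemma conj_diag_posSemidef (U : Matrix d d ℂ) {v : d → ℝ} (hv : ∀ i, 0 ≤ v i) :
    (U * diagonal (fun i => (v i : ℂ)) * Uᴴ).PosSemidef :=
  (PosSemidef.diagonal (fun i => by simpa using hv i)).mul_mul_conjTranspose_same U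

lemma mpow_half {M : Matrix d d ℂ} (hM : M.PosSemidef) :
    (mpow M (1/2)).PosSemidef ∧ mpow M (1/2) * mpow M (1/2) = M := by
  obtain ⟨U, h1, h2, h3, h4⟩ := exists_unitary_diag hM.1
  rw [mpow, dif_pos hM.1, h4]
  refine ⟨conj_diag_posSemidef U fun i => Real.rpow_nonneg (hM.eigenvalues_nonneg i) _, ?_⟩
  rw [conj_mul_conj h1, diagonal_mul_diagonal]
  conv_rhs => rw [h3]
  congr 3
  funext i
  rw [← Complex.ofReal_mul, ← Real.sqrt_eq_rpow, Real.mul_self_sqrt (hM.eigenvalues_nonneg i)]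

/-- A positive semidefinite `S` has a square root `B`, which has a Hermitian generalized inverse `R`
commuting with it. -/
lemma exists_sqrt_pinv {S : Matrix d d ℂ} (hS : S.PosSemidef) :
    ∃ B R : Matrix d d ℂ, B.PosSemidef ∧ B * B = S ∧ Rᴴ = R ∧ B * R = R * B ∧ R * B * B = B := by
  obtain ⟨U, h1, h2, h3, -⟩ := exists_unitary_diag hS.1
  set ev := hS.1.eigenvalues
  refine ⟨U * diagonal (fun i => (√(ev i) : ℂ)) * Uᴴ,
    U * diagonal (fun i => (((√(ev i))⁻¹ : ℝ) : ℂ)) * Uᴴ,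
    conj_diag_posSemidef U fun i => Real.sqrt_nonneg _, ?_, ?_, ?_, ?_⟩
  · rw [conj_mul_conj h1, diagonal_mul_diagonal]
    conv_rhs => rw [h3]
    congr 3
    funext i
    rw [← Complex.ofReal_mul, Real.mul_self_sqrt (hS.eigenvalues_nonneg i)]
  · exact (conj_diag_posSemidef U fun i => inv_nonneg.2 (Real.sqrt_nonneg _)).1
  · rw [conj_mul_conj h1, conj_mul_conj h1, diagonal_mul_diagonal, diagonal_mul_diagonal]
    simp only [mul_comm]
  · rw [conj_mul_conj h1, conj_mul_conj h1, diagonal_mul_diagonal, diagonal_mul_diagonal]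
    congr 3
    funext i
    rw [← Complex.ofReal_mul, ← Complex.ofReal_mul, inv_mul_mul_self]

lemma re_trace_mul_nonneg {M N : Matrix d d ℂ} (hM : M.PosSemidef) (hN : N.PosSemidef) :
    0 ≤ (M * N).trace.re := by
  obtain ⟨hs, hq⟩ := mpow_half hN
  have := PosSemidef.re_trace_nonneg (hM.mul_mul_conjTranspose_same (mpow N (1/2)))
  rwa [hs.1.eq, trace_mul_comm, ← mul_assoc, hq, trace_mul_comm] at this

/-! ### Trace inequalities -/

/-- `Re tr X` is at most the trace norm of `X`. In an eigenbasis of `X Xᴴ`, each diagonal entry of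
`X` is bounded by the norm of its row, which is the square root of the eigenvalue. -/
lemma re_trace_le_trace_sqrt (X : Matrix d d ℂ) :
    X.trace.re ≤ (mpow (X * Xᴴ) (1/2)).trace.re := by
  have hH : (X * Xᴴ).PosSemidef := posSemidef_self_mul_conjTranspose X
  obtain ⟨U, h1, h2, h3, h4⟩ := exists_unitary_diag hH.1
  set ev := hH.1.eigenvalues
  rw [mpow, dif_pos hH.1, h4, trace_conj h1, ← trace_conj' h2 X]
  set Y := Uᴴ * X * U with hY
  have hYY : Y * Yᴴ = diagonal (fun i => (ev i : ℂ)) := by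
    calc Y * Yᴴ = Uᴴ * X * (U * Uᴴ) * Xᴴ * U := by
          rw [hY]; simp only [conjTranspose_mul, conjTranspose_conjTranspose, mul_assoc]
      _ = Uᴴ * (X * Xᴴ) * U := by rw [h2]; noncomm_ring
      _ = (Uᴴ * U) * diagonal (fun i => (ev i : ℂ)) * (Uᴴ * U) := by
          conv_lhs => rw [h3]
          noncomm_ring
      _ = _ := by rw [h1]; simp
  simp only [trace, diag_apply, diagonal_apply_eq, Complex.re_sum, Complex.ofReal_re]
  refine Finset.sum_le_sum fun i _ => ?_
  rw [← Real.sqrt_eq_rpow]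
  refine Real.le_sqrt_of_sq_le ?_
  have hi : (Y * Yᴴ) i i = (ev i : ℂ) := by rw [hYY]; simp
  have hr : ∑ j, Complex.normSq (Y i j) = ev i := by
    have := congrArg Complex.re hi
    simpa [mul_apply, Complex.mul_conj] using this
  calc (Y i i).re ^ 2 ≤ Complex.normSq (Y i i) := by
        rw [Complex.normSq_apply]; nlinarith [sq_nonneg (Y i i).im]
    _ ≤ ∑ j, Complex.normSq (Y i j) :=
        Finset.single_le_sum (f := fun j => Complex.normSq (Y i j))
          (fun j _ => Complex.normSq_nonneg _) (Finset.mem_univ i)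
    _ = ev i := hr

/-- Trace form of operator monotonicity of the square root. In an eigenbasis of `B - A`, with
diagonal entries `a, b ≥ 0` of `A, B` and eigenvalue `μ = b - a`, the corresponding diagonal entry
of `B² - A²` is `μ (a + b) ≥ 0`; this forces `μ ≥ 0`. -/
lemma re_trace_mul_self_le_of_sq_le {A B : Matrix d d ℂ} (hA : A.PosSemidef) (hB : B.PosSemidef)
    (hAB : (B * B - A * A).PosSemidef) : (A * A).trace.re ≤ (A * B).trace.re := by
  have hD : (B - A).IsHermitian := hB.1.sub hA.1
  obtain ⟨U, h1, h2, h3, -⟩ := exists_unitary_diag hD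
  set ev := hD.eigenvalues
  set D : Matrix d d ℂ := diagonal (fun i => (ev i : ℂ)) with hDdef
  set A' := Uᴴ * A * U with hA'
  have hA'p : A'.PosSemidef := hA.conjTranspose_mul_mul_same U
  have hB' : Uᴴ * B * U = A' + D := by
    have : B = A + U * D * Uᴴ := by rw [← h3]; abel
    calc Uᴴ * B * U = Uᴴ * A * U + (Uᴴ * U) * D * (Uᴴ * U) := by
          conv_lhs => rw [this]
          noncomm_ring
      _ = _ := by rw [h1]; simp [hA']
  have hB'p : (A' + D).PosSemidef := hB' ▸ hB.conjTranspose_mul_mul_same U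
  have hsq : (A' * D + D * A' + D * D).PosSemidef := by
    have h := hAB.conjTranspose_mul_mul_same U
    convert h using 1
    calc A' * D + D * A' + D * D = (A' + D) * (A' + D) - A' * A' := by noncomm_ring
      _ = Uᴴ * B * (U * Uᴴ) * B * U - Uᴴ * A * (U * Uᴴ) * A * U := by
          rw [← hB', hA']; noncomm_ring
      _ = _ := by rw [h2]; noncomm_ring
  have key : 0 ≤ (A * (B - A)).trace.re := by
    have : (A * (B - A)).trace = (A' * D).trace := by
      conv_lhs => rw [h3]
      rw [hA', ← mul_assoc, trace_mul_comm, ← mul_assoc, ← mul_assoc]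
    rw [this]
    simp only [trace, diag_apply, Complex.re_sum]
    refine Finset.sum_nonneg fun i _ => ?_
    have ha := PosSemidef.re_diag_nonneg hA'p i
    have hb := PosSemidef.re_diag_nonneg hB'p i
    have hc := PosSemidef.re_diag_nonneg hsq i
    simp only [hDdef, Matrix.add_apply, mul_diagonal, diagonal_mul, diagonal_apply_eq, Complex.add_re,
      Complex.mul_re, Complex.ofReal_re, Complex.ofReal_im, mul_zero, zero_mul, sub_zero]
      at hb hc ⊢
    refine mul_nonneg ha ?_
    by_contra! hneg
    nlinarith
  rw [mul_sub, trace_sub, Complex.sub_re] at key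
  linarith

/-! ### The positive part -/

lemma mposPart_spec {H : Matrix d d ℂ} (hH : H.IsHermitian) :
    (mposPart H).PosSemidef ∧ (mposPart H - H).PosSemidef := by
  obtain ⟨U, h1, h2, h3, h4⟩ := exists_unitary_diag hH
  rw [mposPart, dif_pos hH, h4]
  refine ⟨conj_diag_posSemidef U fun i => le_max_right _ _, ?_⟩
  have := conj_diag_posSemidef U (v := fun i => max (hH.eigenvalues i) 0 - hH.eigenvalues i)
    fun i => sub_nonneg.2 (le_max_left _ _)
  convert this using 1
  simp only [Complex.ofReal_sub, ← diagonal_sub, mul_sub, sub_mul]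
  rw [← h3]

/-- The trace of the positive part of `H` is minimal among positive semidefinite upper bounds. -/
lemma re_trace_mposPart_le {H ρ : Matrix d d ℂ} (hH : H.IsHermitian) (hρ : ρ.PosSemidef)
    (h : (ρ - H).PosSemidef) : (mposPart H).trace.re ≤ ρ.trace.re := by
  obtain ⟨U, h1, h2, h3, h4⟩ := exists_unitary_diag hH
  rw [mposPart, dif_pos hH, h4, trace_conj h1, ← trace_conj' h2 ρ]
  have hd : Uᴴ * (ρ - H) * U = Uᴴ * ρ * U - diagonal (fun i => (hH.eigenvalues i : ℂ)) := by
    calc Uᴴ * (ρ - H) * U = Uᴴ * ρ * U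
          - (Uᴴ * U) * diagonal (fun i => (hH.eigenvalues i : ℂ)) * (Uᴴ * U) := by
          conv_lhs => rw [h3]
          noncomm_ring
      _ = _ := by rw [h1]; simp
  simp only [trace, diag_apply, diagonal_apply_eq, Complex.re_sum, Complex.ofReal_re]
  refine Finset.sum_le_sum fun i _ => max_le ?_ ?_
  · have := PosSemidef.re_diag_nonneg (hd ▸ h.conjTranspose_mul_mul_same U) i
    simpa using this
  · exact PosSemidef.re_diag_nonneg (hρ.conjTranspose_mul_mul_same U) i

/-! ### The smoothing contraction -/

/-- If `τ ≤ S`, some contraction `G` carries `S` to `τ` by conjugation, and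
`Re tr (G S) ≥ tr τ`. -/
lemma exists_contraction {τ S : Matrix d d ℂ} (hτ : τ.PosSemidef) (hS : S.PosSemidef)
    (h : (S - τ).PosSemidef) :
    ∃ G : Matrix d d ℂ, (1 - Gᴴ * G).PosSemidef ∧ G * S * Gᴴ = τ ∧
      τ.trace.re ≤ (G * S).trace.re := by
  obtain ⟨hA, hAA⟩ := mpow_half hτ
  set A := mpow τ (1/2)
  obtain ⟨B, R, hB, hBB, hR, hcomm, hRBB⟩ := exists_sqrt_pinv hS
  -- The projection onto the support of `S`.
  set Q := R * B with hQ
  have hQB : Q * B = B := hRBB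
  have hQh : Qᴴ = Q := by rw [hQ, conjTranspose_mul, hR, hB.1.eq, hcomm]
  have hQQ : Q * Q = Q := by
    calc Q * Q = R * B * (B * R) := by rw [hcomm]
      _ = (R * B * B) * R := by noncomm_ring
      _ = Q := by rw [hRBB, hcomm]
  have hQc : (1 - Q).PosSemidef := by
    have := posSemidef_conjTranspose_mul_self (1 - Q)
    convert this using 1
    rw [conjTranspose_sub, conjTranspose_one, hQh, mul_sub, sub_mul, sub_mul, hQQ]
    simp
  -- `A` is supported on the support of `S`, since `A² ≤ S`.
  have hAQ : A * Q = A := by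
    have h0 : A * (1 - Q) = 0 := by
      have h1 : (1 - Q)ᴴ = 1 - Q := hQc.1
      have hp := h.conjTranspose_mul_mul_same (1 - Q)
      have hS0 : (1 - Q) * S = 0 := by
        rw [← hBB, ← mul_assoc, sub_mul, hQB]; simp
      have he : (1 - Q)ᴴ * (S - τ) * (1 - Q) = -((A * (1 - Q))ᴴ * (A * (1 - Q))) := by
        rw [conjTranspose_mul, h1, hA.1.eq, mul_sub (1 - Q) S, hS0, ← hAA]
        noncomm_ring
      rw [he] at hp
      have hq := posSemidef_conjTranspose_mul_self (A * (1 - Q))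
      refine trace_conjTranspose_mul_self_eq_zero_iff.1 (le_antisymm ?_ hq.trace_nonneg)
      have := hp.trace_nonneg
      rwa [trace_neg, Left.nonneg_neg_iff] at this
    rw [mul_sub, mul_one, sub_eq_zero] at h0
    exact h0.symm
  refine ⟨A * R, ?_, ?_, ?_⟩
  · have h1 := h.conjTranspose_mul_mul_same R
    have h2 := h1.add hQc
    convert h2 using 1
    have : R * S * R = Q := by
      rw [← hBB]
      calc R * (B * B) * R = (R * B) * (B * R) := by noncomm_ring
        _ = Q := by rw [hcomm, hQQ]
    rw [conjTranspose_mul, hR, hA.1.eq, mul_sub, sub_mul, this, ← hAA]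
    noncomm_ring
  · rw [conjTranspose_mul, hR, hA.1.eq, ← hBB]
    calc A * R * (B * B) * (R * A) = A * (R * B) * (B * R) * A := by noncomm_ring
      _ = τ := by rw [hcomm, hAQ, hAQ, hAA]
  · have : A * R * S = A * B := by
      rw [← hBB]
      calc A * R * (B * B) = A * (R * B * B) := by noncomm_ring
        _ = A * B := by rw [hRBB]
    rw [this]
    conv_lhs => rw [← hAA]
    exact re_trace_mul_self_le_of_sq_le hA hB (by rwa [hBB, hAA])

/-- A contraction `G` satisfies `G + Gᴴ ≤ 2`. -/
lemma two_sub_posSemidef {G : Matrix d d ℂ} (hG : (1 - Gᴴ * G).PosSemidef) :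
    (1 + 1 - G - Gᴴ).PosSemidef := by
  have := hG.add (posSemidef_conjTranspose_mul_self (1 - G))
  convert this using 1
  rw [conjTranspose_sub, conjTranspose_one]
  noncomm_ring

end Aux

/-- **Smoothing lemma for the max-divergence**: given a sub-normalized state `ρ`, a
positive semidefinite `σ` and `λ ∈ ℝ`, with `Σ` the positive part of `ρ - e^λ σ` and
`s = Re tr Σ`, there is a sub-normalized state `ρ̃` with `ρ̃ ≤ e^λ σ` and
`P(ρ̃, ρ) ≤ √(2 s - s²)`. -/
theorem smoothing_max_divergence {n : ℕ}
    (ρ σ : Matrix (Fin n) (Fin n) ℂ)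
    (hρ : ρ.PosSemidef) (hρ1 : ρ.trace.re ≤ 1) (hσ : σ.PosSemidef) (l : ℝ) :
    ∃ ρt : Matrix (Fin n) (Fin n) ℂ,
      ρt.PosSemidef ∧ ρt.trace.re ≤ 1 ∧
      ((Real.exp l : ℂ) • σ - ρt).PosSemidef ∧
      purifiedDist ρt ρ ≤
        Real.sqrt (2 * ((mposPart (ρ - (Real.exp l : ℂ) • σ)).trace).re -
          (((mposPart (ρ - (Real.exp l : ℂ) • σ)).trace).re) ^ 2) := by
  set τ : Matrix (Fin n) (Fin n) ℂ := (Real.exp l : ℂ) • σ with hτdef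
  have hτ : τ.PosSemidef :=
    hσ.smul (Complex.zero_le_real.2 (Real.exp_pos l).le)
  have hH : (ρ - τ).IsHermitian := hρ.1.sub hτ.1
  obtain ⟨hP, hPH⟩ := mposPart_spec hH
  have hs : (mposPart (ρ - τ)).trace.re ≤ ρ.trace.re :=
    re_trace_mposPart_le hH hρ (by simpa using hτ)
  set P := mposPart (ρ - τ)
  have hSρ : (τ + P - ρ).PosSemidef := by
    convert hPH using 1
    abel
  obtain ⟨G, hG1, hG2, hG3⟩ := exists_contraction hτ (hτ.add hP) (by simpa using hP)
  have hρt : (G * ρ * Gᴴ).PosSemidef := hρ.mul_mul_conjTranspose_same G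
  have htr : (G * ρ * Gᴴ).trace.re ≤ ρ.trace.re := by
    have := re_trace_mul_nonneg hG1 hρ
    rw [sub_mul, one_mul, trace_sub, Complex.sub_re, mul_assoc Gᴴ, trace_mul_comm Gᴴ] at this
    linarith
  refine ⟨G * ρ * Gᴴ, hρt, htr.trans hρ1, ?_, ?_⟩
  · have := hSρ.mul_mul_conjTranspose_same G
    rwa [mul_sub, sub_mul, hG2] at this
  · obtain ⟨hr, hrr⟩ := mpow_half hρ
    refine Real.sqrt_le_sqrt ?_
    rw [gFidelity]
    set r := mpow ρ (1/2)
    have hX : r * (G * ρ * Gᴴ) * r = (r * G * r) * (r * G * r)ᴴ := by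
      rw [conjTranspose_mul, conjTranspose_mul, hr.1.eq]
      calc _ = r * G * (r * r) * Gᴴ * r := by rw [hrr]; noncomm_ring
        _ = _ := by noncomm_ring
    have hf := re_trace_le_trace_sqrt (r * G * r)
    have hXt : (r * G * r).trace = (G * ρ).trace := by
      rw [trace_mul_comm, ← mul_assoc, hrr, trace_mul_comm]
    rw [← hX, hXt] at hf
    have hsq : 1 - ρ.trace.re ≤
        √((1 - (G * ρ * Gᴴ).trace.re) * (1 - ρ.trace.re)) := by
      refine Real.le_sqrt_of_sq_le ?_
      rw [sq]
      exact mul_le_mul_of_nonneg_right (by linarith) (by linarith)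
    have hK := re_trace_mul_nonneg (two_sub_posSemidef hG1) hSρ
    -- `Re tr (Gᴴ M) = Re tr (G M)` for Hermitian `M`.
    have hstar : (Gᴴ * (τ + P - ρ)).trace.re = (G * (τ + P - ρ)).trace.re := by
      rw [← hSρ.1.eq, ← conjTranspose_mul, trace_conjTranspose, trace_mul_comm, hSρ.1.eq]
      simp
    rw [sub_mul, sub_mul, add_mul, one_mul] at hK
    simp only [trace_sub, trace_add, Complex.sub_re, Complex.add_re, hstar] at hK
    rw [mul_sub, trace_sub, Complex.sub_re] at hK
    have h1s : 1 - P.trace.re ≤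
        (mpow (r * (G * ρ * Gᴴ) * r) (1/2)).trace.re +
          √((1 - (G * ρ * Gᴴ).trace.re) * (1 - ρ.trace.re)) := by
      linarith
    have := pow_le_pow_left₀ (by linarith) h1s 2
    linarith
end
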